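/- arXiv:1603.01891 — 4 statements merged into one kernel-verified Lean document; each statement's English description precedes it below -/
import Mathlib

section
/- Let 1≤s≤∞, and let g(t), h(t) be 2π-periodic functions having finite derivatives and satisfying r(t) := √(g²(t)+h²(t)) ≠ 0 for all t and M := sup_{t∈ℝ} √((g'(t))²+(h'(t))²) / √(g²(t)+h²(t)) < ∞. Let φ(t) = g(t)cos(nt+γ) + h(t)sin(nt+γ) with γ∈ℝ, n∈ℕ. Then for all n ≥ 4πsM if 1≤s<∞ (and all n≥1 if s=∞), one has ‖φ‖_s = ‖r‖_s ( ‖cos t‖_s/(2π)^{1/s} + δ_n M/n ), where |δ_n| < 14π. -/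
open MeasureTheory Real Filter
open scoped ENNReal

/-- `L_s` norm over a period `[-π,π]` of a `2π`-periodic function. -/
noncomputable def periodNorm (s : ℝ≥0∞) (f : ℝ → ℝ) : ℝ :=
  (eLpNorm f s (volume.restrict (Set.Ioc (-π) π))).toReal

/-!
Put `z = g + ih`, so that `r = ‖z‖` and `φ t = Re (z t * e ^ (-i(nt + γ)))`. Let `φ_θ` be the same
function with the phase `γ` replaced by `θ`.

* Averaging over `θ` replaces `|φ_θ t| ^ s` by `r t ^ s` times the mean of `|cos| ^ s`, so by the
  mean value theorem some phase `θ` in `[γ, γ + 2π]` satisfies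
  `‖φ_θ‖_s = ‖r‖_s ‖cos‖_s / (2π) ^ (1 / s)` exactly. For `s = ∞`, take a phase that aligns with `z`
  at a maximum of `r`.
* Translating `φ` by `τ = (θ - γ) / n ≤ 2π / n` preserves its norm and changes the phase to `θ`, at
  the price of having `z (t + τ)` instead of `z t` as amplitude. Grönwall's inequality for
  `‖z'‖ ≤ M ‖z‖` bounds this discrepancy by `(e ^ (M τ) - 1) r t`, which is at most `2 M τ r t` if
  `M τ ≤ 1`; for larger `M τ` the trivial bound `‖φ_θ‖_s ≤ ‖r‖_s` suffices.
-/

lemma norm_sub_le_exp_sub_one_mul {E : Type*} [NormedAddCommGroup E] [NormedSpace ℝ E]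
    {f f' : ℝ → E} {K a b : ℝ} (hK : 0 ≤ K) (hab : a ≤ b)
    (hf : ContinuousOn f (Set.Icc a b))
    (hf' : ∀ x ∈ Set.Ico a b, HasDerivWithinAt f (f' x) (Set.Ici x) x)
    (bound : ∀ x ∈ Set.Ico a b, ‖f' x‖ ≤ K * ‖f x‖) :
    ‖f b - f a‖ ≤ (exp (K * (b - a)) - 1) * ‖f a‖ := by
  have bound_sub : ∀ x ∈ Set.Ico a b, ‖f' x‖ ≤ K * ‖f x - f a‖ + K * ‖f a‖ := fun x hx => by
    rw [← mul_add]
    exact (bound x hx).trans (by gcongr; exact norm_le_norm_sub_add _ _)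
  have gronwall : ‖f b - f a‖ ≤ gronwallBound 0 K (K * ‖f a‖) (b - a) :=
    norm_le_gronwallBound_of_norm_deriv_right_le (f := fun x => f x - f a)
      (hf.sub continuousOn_const) (fun x hx => (hf' x hx).sub_const _) (by simp) bound_sub b
      ⟨hab, le_rfl⟩
  rcases eq_or_ne K 0 with rfl | hK0
  · simpa [gronwallBound_K0] using gronwall
  · rw [gronwallBound_of_K_ne_0 hK0, mul_div_cancel_left₀ _ hK0] at gronwall
    linarith

section PeriodNorm

variable {s : ℝ≥0∞} {f g : ℝ → ℝ}

lemma periodNorm_nonneg (s : ℝ≥0∞) (f : ℝ → ℝ) : 0 ≤ periodNorm s f :=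
  ENNReal.toReal_nonneg

lemma memLp_Ioc_of_continuous (s : ℝ≥0∞) (hf : Continuous f) (a b : ℝ) :
    MemLp f s (volume.restrict (Set.Ioc a b)) := by
  obtain ⟨C, hC⟩ := (isCompact_Icc (a := a) (b := b)).exists_bound_of_continuousOn hf.continuousOn
  exact MemLp.of_bound hf.aestronglyMeasurable C <|
    ae_restrict_of_forall_mem measurableSet_Ioc fun x hx => hC x (Set.Ioc_subset_Icc_self hx)

lemma periodNorm_eq_lpNorm (s : ℝ≥0∞) (hf : Continuous f) :
    periodNorm s f = lpNorm f s (volume.restrict (Set.Ioc (-π) π)) :=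
  toReal_eLpNorm hf.aestronglyMeasurable

lemma periodNorm_mono (hf : Continuous f) (hg : Continuous g) (h : ∀ t, |f t| ≤ g t) :
    periodNorm s f ≤ periodNorm s g := by
  rw [periodNorm_eq_lpNorm s hf, periodNorm_eq_lpNorm s hg]
  exact lpNorm_mono_real (memLp_Ioc_of_continuous s hg _ _) h

lemma periodNorm_const_mul {c : ℝ} (hc : 0 ≤ c) (hf : Continuous f) :
    periodNorm s (fun t => c * f t) = c * periodNorm s f := by
  rw [periodNorm_eq_lpNorm s hf, periodNorm_eq_lpNorm s (by fun_prop)]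
  refine (lpNorm_const_smul c f _).trans ?_
  rw [coe_nnnorm, norm_of_nonneg hc]

lemma abs_periodNorm_sub_le (hs : 1 ≤ s) (hf : Continuous f) (hg : Continuous g) :
    |periodNorm s f - periodNorm s g| ≤ periodNorm s (f - g) := by
  rw [periodNorm_eq_lpNorm s hf, periodNorm_eq_lpNorm s hg, periodNorm_eq_lpNorm s (hf.sub hg),
    abs_sub_le_iff, sub_le_iff_le_add', sub_le_iff_le_add']
  exact ⟨lpNorm_le_lpNorm_add_lpNorm_sub' (memLp_Ioc_of_continuous s hg _ _) hs,
    lpNorm_le_lpNorm_add_lpNorm_sub (memLp_Ioc_of_continuous s hf _ _) hs⟩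

lemma periodNorm_rpow (hs0 : s ≠ 0) (hs : s ≠ ∞) (hf : Continuous f) :
    periodNorm s f ^ s.toReal = ∫ t in (-π)..π, |f t| ^ s.toReal := by
  have hp : s.toReal ≠ 0 := (ENNReal.toReal_pos hs0 hs).ne'
  rw [periodNorm_eq_lpNorm s hf,
    lpNorm_eq_integral_norm_rpow_toReal hs0 hs hf.aestronglyMeasurable,
    rpow_inv_rpow (integral_nonneg fun t => by positivity) hp,
    intervalIntegral.integral_of_le (by linarith [pi_pos])]
  rfl

lemma periodNorm_top_le {C : ℝ} (hC : 0 ≤ C) (h : ∀ t ∈ Set.Icc (-π) π, |f t| ≤ C) :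
    periodNorm ∞ f ≤ C := by
  refine ENNReal.toReal_le_of_le_ofReal hC ?_
  rw [eLpNorm_exponent_top]
  exact eLpNormEssSup_le_of_ae_bound <|
    ae_restrict_of_forall_mem measurableSet_Ioc fun t ht => h t (Set.Ioc_subset_Icc_self ht)

lemma abs_le_periodNorm_top (hf : Continuous f) {t : ℝ} (ht : t ∈ Set.Icc (-π) π) :
    |f t| ≤ periodNorm ∞ f := by
  have ae_le : ∀ᵐ x ∂volume.restrict (Set.Icc (-π) π), |f x| ≤ periodNorm ∞ f := by
    rw [periodNorm_eq_lpNorm ∞ hf, ← restrict_Ioc_eq_restrict_Icc]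
    exact ae_le_lpNorm_exponent_top (memLp_Ioc_of_continuous ∞ hf _ _)
  have max_eq : Set.EqOn (fun x => max |f x| (periodNorm ∞ f)) (fun _ => periodNorm ∞ f)
      (Set.Icc (-π) π) :=
    Measure.eqOn_Icc_of_ae_eq volume (by linarith [pi_pos])
      (ae_le.mono fun x hx => max_eq_right hx) (by fun_prop) (by fun_prop)
  exact max_eq_right_iff.1 (max_eq ht)

lemma eLpNorm_Ioc_add_eq_of_periodic {T : ℝ} (hT : 0 < T) (s : ℝ≥0∞) (hf : Continuous f)
    (hper : Function.Periodic f T) (a b : ℝ) :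
    eLpNorm f s (volume.restrict (Set.Ioc a (a + T))) =
      eLpNorm f s (volume.restrict (Set.Ioc b (b + T))) := by
  have : Fact (0 < T) := ⟨hT⟩
  have hlift : Continuous (hper.lift : AddCircle T → ℝ) := continuous_quot_lift _ hf
  have eq_lift (c : ℝ) :
      eLpNorm f s (volume.restrict (Set.Ioc c (c + T))) = eLpNorm hper.lift s volume := by
    have hcomp : f = hper.lift ∘ ((↑) : ℝ → AddCircle T) := funext fun x => (hper.lift_coe x).symm
    nth_rw 1 [hcomp]
    exact eLpNorm_comp_measurePreserving hlift.aestronglyMeasurable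
      (AddCircle.measurePreserving_mk T c)
  rw [eq_lift, eq_lift]

lemma periodNorm_comp_add_right (s : ℝ≥0∞) (hf : Continuous f)
    (hper : Function.Periodic f (2 * π)) (τ : ℝ) :
    periodNorm s (fun t => f (t + τ)) = periodNorm s f := by
  have translate : MeasurePreserving (· + τ) (volume.restrict (Set.Ioc (-π) π))
      (volume.restrict (Set.Ioc (-π + τ) (π + τ))) := by
    simpa using (measurePreserving_add_right volume τ).restrict_preimage
      (measurableSet_Ioc (a := -π + τ) (b := π + τ))
  have eLpNorm_translate : eLpNorm (fun t => f (t + τ)) s (volume.restrict (Set.Ioc (-π) π)) =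
      eLpNorm f s (volume.restrict (Set.Ioc (-π + τ) (π + τ))) :=
    eLpNorm_comp_measurePreserving hf.aestronglyMeasurable translate
  have eLpNorm_period := eLpNorm_Ioc_add_eq_of_periodic two_pi_pos s hf hper (-π + τ) (-π)
  rw [show -π + τ + 2 * π = π + τ by ring, show -π + 2 * π = π by ring] at eLpNorm_period
  rw [periodNorm, periodNorm, eLpNorm_translate, eLpNorm_period]

lemma periodNorm_top_cos : periodNorm ∞ cos = 1 :=
  le_antisymm (periodNorm_top_le zero_le_one fun t _ => abs_cos_le_one t) <| by
    simpa using abs_le_periodNorm_top continuous_cos (t := 0) ⟨by linarith [pi_pos], pi_pos.le⟩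

end PeriodNorm

section PhaseProj

/-- The component of the complex number `w` in the direction `e ^ (iθ)`, that is,
`Re (w * e ^ (-iθ))`; it is written in coordinates to match `g cos θ + h sin θ` for `w = g + ih`. -/
noncomputable def phaseProj (w : ℂ) (θ : ℝ) : ℝ :=
  w.re * cos θ + w.im * sin θ

lemma continuous_uncurry_phaseProj : Continuous (Function.uncurry phaseProj) := by
  unfold Function.uncurry phaseProj
  fun_prop

lemma phaseProj_sub_left (w v : ℂ) (θ : ℝ) :
    phaseProj (w - v) θ = phaseProj w θ - phaseProj v θ := by
  simp only [phaseProj, Complex.sub_re, Complex.sub_im]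
  ring

lemma phaseProj_add_nat_mul_two_pi (w : ℂ) (θ : ℝ) (n : ℕ) :
    phaseProj w (θ + n * (2 * π)) = phaseProj w θ := by
  rw [phaseProj, cos_add_nat_mul_two_pi, sin_add_nat_mul_two_pi, phaseProj]

lemma phaseProj_eq_norm_mul_cos (w : ℂ) (θ : ℝ) :
    phaseProj w θ = ‖w‖ * cos (θ - w.arg) := by
  rw [phaseProj, cos_sub]
  linear_combination -cos θ * Complex.norm_mul_cos_arg w - sin θ * Complex.norm_mul_sin_arg w

lemma abs_phaseProj_le_norm (w : ℂ) (θ : ℝ) : |phaseProj w θ| ≤ ‖w‖ := by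
  rw [phaseProj_eq_norm_mul_cos, abs_mul, abs_norm]
  exact mul_le_of_le_one_right (norm_nonneg w) (abs_cos_le_one _)

lemma exists_phaseProj_eq_norm (w : ℂ) (a : ℝ) :
    ∃ θ ∈ Set.Icc a (a + 2 * π), phaseProj w θ = ‖w‖ := by
  obtain ⟨x, hx, hcos⟩ := cos_periodic.exists_mem_Ioc two_pi_pos 0 (a - w.arg)
  refine ⟨x + w.arg, ⟨by linarith [hx.1], by linarith [hx.2]⟩, ?_⟩
  rw [phaseProj_eq_norm_mul_cos, add_sub_cancel_right, ← hcos, cos_zero, mul_one]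

lemma integral_abs_phaseProj_add_rpow (w : ℂ) (x a p : ℝ) :
    ∫ θ in a..(a + 2 * π), |phaseProj w (x + θ)| ^ p =
      ‖w‖ ^ p * ∫ t in (-π)..π, |cos t| ^ p := by
  have hper : Function.Periodic (fun t => |cos t| ^ p) (2 * π) := fun t => by simp
  calc ∫ θ in a..(a + 2 * π), |phaseProj w (x + θ)| ^ p
      = ∫ θ in a..(a + 2 * π), ‖w‖ ^ p * |cos (x - w.arg + θ)| ^ p := by
        refine intervalIntegral.integral_congr fun θ _ => ?_
        simp only [phaseProj_eq_norm_mul_cos, abs_mul, abs_norm]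
        rw [mul_rpow (norm_nonneg w) (abs_nonneg _), add_sub_right_comm]
    _ = ‖w‖ ^ p * ∫ t in (x - w.arg + a)..(x - w.arg + a + 2 * π), |cos t| ^ p := by
        rw [intervalIntegral.integral_const_mul,
          intervalIntegral.integral_comp_add_left (fun t => |cos t| ^ p), ← add_assoc]
    _ = ‖w‖ ^ p * ∫ t in (-π)..π, |cos t| ^ p := by
        rw [hper.intervalIntegral_add_eq _ (-π), show -π + 2 * π = π by ring]

end PhaseProj

section ModulatedWave

/-- The wave `Re (z t * e ^ (-i(ωt + θ)))` of frequency `ω` and phase `θ`, modulated by the complex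
amplitude `z`. For `z = g + ih` it is `g t * cos (ωt + θ) + h t * sin (ωt + θ)`. -/
noncomputable def modulatedWave (z : ℝ → ℂ) (ω θ t : ℝ) : ℝ :=
  phaseProj (z t) (ω * t + θ)

variable {s : ℝ≥0∞} {z z' : ℝ → ℂ} {M : ℝ}

lemma modulatedWave_ofReal_add_mul_I (g h : ℝ → ℝ) (ω θ : ℝ) :
    modulatedWave (fun t => g t + h t * Complex.I) ω θ =
      fun t => g t * cos (ω * t + θ) + h t * sin (ω * t + θ) := by
  ext t
  simp [modulatedWave, phaseProj]

lemma continuous_uncurry_modulatedWave (hz : Continuous z) (ω : ℝ) :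
    Continuous (Function.uncurry (modulatedWave z ω)) :=
  continuous_uncurry_phaseProj.comp (f := fun q : ℝ × ℝ => (z q.2, ω * q.2 + q.1)) (by fun_prop)

lemma continuous_modulatedWave (hz : Continuous z) (ω θ : ℝ) : Continuous (modulatedWave z ω θ) :=
  (continuous_uncurry_modulatedWave hz ω).comp (Continuous.prodMk_right θ)

lemma periodic_modulatedWave (hper : Function.Periodic z (2 * π)) (n : ℕ) (θ : ℝ) :
    Function.Periodic (modulatedWave z n θ) (2 * π) := fun t => by
  have phase_shift : n * (t + 2 * π) + θ = n * t + θ + n * (2 * π) := by ring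
  rw [modulatedWave, modulatedWave, hper, phase_shift, phaseProj_add_nat_mul_two_pi]

lemma periodNorm_modulatedWave_le (hz : Continuous z) (ω θ : ℝ) :
    periodNorm s (modulatedWave z ω θ) ≤ periodNorm s (fun t => ‖z t‖) :=
  periodNorm_mono (continuous_modulatedWave hz ω θ) hz.norm fun _ => abs_phaseProj_le_norm _ _

lemma integral_periodNorm_modulatedWave_rpow (hs0 : s ≠ 0) (hs : s ≠ ∞) (hz : Continuous z)
    (ω γ : ℝ) :
    ∫ θ in γ..(γ + 2 * π), periodNorm s (modulatedWave z ω θ) ^ s.toReal =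
      (periodNorm s (fun t => ‖z t‖) * periodNorm s cos) ^ s.toReal := by
  have hcont : Continuous
      (Function.uncurry fun θ t => |modulatedWave z ω θ t| ^ s.toReal) :=
    (continuous_uncurry_modulatedWave hz ω).abs.rpow_const fun _ => Or.inr ENNReal.toReal_nonneg
  have hint : IntegrableOn (Function.uncurry fun θ t => |modulatedWave z ω θ t| ^ s.toReal)
      (Set.uIoc γ (γ + 2 * π) ×ˢ Set.uIoc (-π) π) :=
    (hcont.continuousOn.integrableOn_compact (isCompact_uIcc.prod isCompact_uIcc)).mono_set
      (Set.prod_mono Set.uIoc_subset_uIcc Set.uIoc_subset_uIcc)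
  calc ∫ θ in γ..(γ + 2 * π), periodNorm s (modulatedWave z ω θ) ^ s.toReal
      = ∫ θ in γ..(γ + 2 * π), ∫ t in (-π)..π, |modulatedWave z ω θ t| ^ s.toReal := by
        simp only [periodNorm_rpow hs0 hs (continuous_modulatedWave hz ω _)]
    _ = ∫ t in (-π)..π, ∫ θ in γ..(γ + 2 * π), |modulatedWave z ω θ t| ^ s.toReal :=
        intervalIntegral_intervalIntegral_swap hint
    _ = ∫ t in (-π)..π, ‖z t‖ ^ s.toReal * ∫ x in (-π)..π, |cos x| ^ s.toReal := by
        simp only [modulatedWave, integral_abs_phaseProj_add_rpow]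
    _ = (periodNorm s (fun t => ‖z t‖) * periodNorm s cos) ^ s.toReal := by
        rw [intervalIntegral.integral_mul_const,
          mul_rpow (periodNorm_nonneg _ _) (periodNorm_nonneg _ _),
          periodNorm_rpow hs0 hs hz.norm, periodNorm_rpow hs0 hs continuous_cos]
        simp only [abs_norm]

lemma exists_periodNorm_modulatedWave_eq_of_ne_top (hs0 : s ≠ 0) (hs : s ≠ ∞) (hz : Continuous z)
    (ω γ : ℝ) :
    ∃ θ ∈ Set.Icc γ (γ + 2 * π), periodNorm s (modulatedWave z ω θ) =
      periodNorm s (fun t => ‖z t‖) * (periodNorm s cos / (2 * π) ^ (1 / s.toReal)) := by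
  have hp : s.toReal ≠ 0 := (ENNReal.toReal_pos hs0 hs).ne'
  have hcont : Continuous fun θ => periodNorm s (modulatedWave z ω θ) ^ s.toReal := by
    simp only [periodNorm_rpow hs0 hs (continuous_modulatedWave hz ω _)]
    exact intervalIntegral.continuous_parametric_intervalIntegral_of_continuous'
      ((continuous_uncurry_modulatedWave hz ω).abs.rpow_const
        fun _ => Or.inr ENNReal.toReal_nonneg) _ _
  obtain ⟨θ, hθ, hmean⟩ := exists_eq_interval_average (a := γ) (b := γ + 2 * π)
    (by linarith [two_pi_pos]) hcont.continuousOn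
  rw [interval_average_eq_div, integral_periodNorm_modulatedWave_rpow hs0 hs hz,
    add_sub_cancel_left] at hmean
  have hr := periodNorm_nonneg s fun t => ‖z t‖
  have hcos := periodNorm_nonneg s cos
  refine ⟨θ, ?_, (rpow_left_inj (periodNorm_nonneg _ _) (by positivity) hp).1 ?_⟩
  · rw [Set.uIoo_of_le (by linarith [two_pi_pos])] at hθ
    exact Set.Ioo_subset_Icc_self hθ
  · rw [hmean, ← mul_div_assoc, div_rpow (by positivity) (by positivity), one_div,
      rpow_inv_rpow two_pi_pos.le hp]

lemma exists_periodNorm_top_modulatedWave_eq (hz : Continuous z) (ω γ : ℝ) :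
    ∃ θ ∈ Set.Icc γ (γ + 2 * π),
      periodNorm ∞ (modulatedWave z ω θ) = periodNorm ∞ (fun t => ‖z t‖) := by
  obtain ⟨t, ht, hmax⟩ := isCompact_Icc.exists_isMaxOn
    (Set.nonempty_Icc.2 (by linarith [pi_pos] : -π ≤ π)) hz.norm.continuousOn
  obtain ⟨x, hx, hxt⟩ := exists_phaseProj_eq_norm (z t) (ω * t + γ)
  refine ⟨x - ω * t, ⟨by linarith [hx.1], by linarith [hx.2]⟩,
    le_antisymm (periodNorm_modulatedWave_le hz ω _) ?_⟩
  calc periodNorm ∞ (fun t => ‖z t‖)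
      ≤ ‖z t‖ := periodNorm_top_le (norm_nonneg _) fun u hu => by simpa using hmax hu
    _ = modulatedWave z ω (x - ω * t) t := by rw [modulatedWave, add_sub_cancel, hxt]
    _ ≤ periodNorm ∞ (modulatedWave z ω (x - ω * t)) :=
        (le_abs_self _).trans (abs_le_periodNorm_top (continuous_modulatedWave hz ω _) ht)

-- For `s = ∞` the conventions `∞.toReal = 0` and `1 / 0 = 0` turn `(2π) ^ (1 / s)` into `1`.
lemma exists_periodNorm_modulatedWave_eq (hs0 : s ≠ 0) (hz : Continuous z) (ω γ : ℝ) :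
    ∃ θ ∈ Set.Icc γ (γ + 2 * π), periodNorm s (modulatedWave z ω θ) =
      periodNorm s (fun t => ‖z t‖) * (periodNorm s cos / (2 * π) ^ (1 / s.toReal)) := by
  rcases eq_or_ne s ∞ with rfl | hs
  · simpa [periodNorm_top_cos] using exists_periodNorm_top_modulatedWave_eq hz ω γ
  · exact exists_periodNorm_modulatedWave_eq_of_ne_top hs0 hs hz ω γ

lemma abs_modulatedWave_add_sub_le (z : ℝ → ℂ) (ω γ τ t : ℝ) :
    |modulatedWave z ω γ (t + τ) - modulatedWave z ω (γ + ω * τ) t| ≤ ‖z (t + τ) - z t‖ := by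
  have same_phase : ω * (t + τ) + γ = ω * t + (γ + ω * τ) := by ring
  rw [modulatedWave, modulatedWave, same_phase, ← phaseProj_sub_left]
  exact abs_phaseProj_le_norm _ _

lemma abs_periodNorm_modulatedWave_sub_le_exp (hs : 1 ≤ s) (hper : Function.Periodic z (2 * π))
    (hz : ∀ t, HasDerivAt z (z' t) t) (hM0 : 0 ≤ M) (hM : ∀ t, ‖z' t‖ ≤ M * ‖z t‖) (n : ℕ)
    (γ : ℝ) {τ : ℝ} (hτ : 0 ≤ τ) :
    |periodNorm s (modulatedWave z n γ) - periodNorm s (modulatedWave z n (γ + n * τ))| ≤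
      (exp (M * τ) - 1) * periodNorm s (fun t => ‖z t‖) := by
  have hcont : Continuous z := continuous_iff_continuousAt.2 fun t => (hz t).continuousAt
  have hwave := continuous_modulatedWave hcont n
  have amplitude_change (t : ℝ) : ‖z (t + τ) - z t‖ ≤ (exp (M * τ) - 1) * ‖z t‖ := by
    simpa using norm_sub_le_exp_sub_one_mul hM0 (le_add_of_nonneg_right hτ) hcont.continuousOn
      (fun x _ => (hz x).hasDerivWithinAt) (fun x _ => hM x)
  calc |periodNorm s (modulatedWave z n γ) - periodNorm s (modulatedWave z n (γ + n * τ))|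
      = |periodNorm s (fun t => modulatedWave z n γ (t + τ)) -
          periodNorm s (modulatedWave z n (γ + n * τ))| := by
        rw [periodNorm_comp_add_right s (hwave γ) (periodic_modulatedWave hper n γ)]
    _ ≤ periodNorm s
          ((fun t => modulatedWave z n γ (t + τ)) - modulatedWave z n (γ + n * τ)) :=
        abs_periodNorm_sub_le hs ((hwave γ).comp (continuous_add_const τ)) (hwave _)
    _ ≤ periodNorm s (fun t => (exp (M * τ) - 1) * ‖z t‖) :=
        periodNorm_mono (((hwave γ).comp (continuous_add_const τ)).sub (hwave _)) (by fun_prop)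
          fun t => (abs_modulatedWave_add_sub_le z n γ τ t).trans (amplitude_change t)
    _ = (exp (M * τ) - 1) * periodNorm s (fun t => ‖z t‖) :=
        periodNorm_const_mul (sub_nonneg.2 (one_le_exp (by positivity))) hcont.norm

lemma abs_periodNorm_modulatedWave_sub_le (hs : 1 ≤ s) (hper : Function.Periodic z (2 * π))
    (hz : ∀ t, HasDerivAt z (z' t) t) (hM0 : 0 ≤ M) (hM : ∀ t, ‖z' t‖ ≤ M * ‖z t‖) (n : ℕ)
    (γ : ℝ) {τ : ℝ} (hτ : 0 ≤ τ) :
    |periodNorm s (modulatedWave z n γ) - periodNorm s (modulatedWave z n (γ + n * τ))| ≤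
      2 * (M * τ) * periodNorm s (fun t => ‖z t‖) := by
  have hr := periodNorm_nonneg s fun t => ‖z t‖
  have hMτ : 0 ≤ M * τ := by positivity
  rcases le_total (M * τ) 1 with hle | hge
  · have exp_le : exp (M * τ) - 1 ≤ 2 * (M * τ) := by
      simpa [abs_of_nonneg hMτ] using
        (le_abs_self _).trans (abs_exp_sub_one_le (x := M * τ) (by rwa [abs_of_nonneg hMτ]))
    exact (abs_periodNorm_modulatedWave_sub_le_exp hs hper hz hM0 hM n γ hτ).trans (by gcongr)
  · have hcont : Continuous z := continuous_iff_continuousAt.2 fun t => (hz t).continuousAt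
    calc |periodNorm s (modulatedWave z n γ) - periodNorm s (modulatedWave z n (γ + n * τ))|
        ≤ periodNorm s (fun t => ‖z t‖) :=
          abs_sub_le_of_nonneg_of_le (periodNorm_nonneg _ _) (periodNorm_modulatedWave_le hcont _ _)
            (periodNorm_nonneg _ _) (periodNorm_modulatedWave_le hcont _ _)
      _ ≤ 2 * (M * τ) * periodNorm s (fun t => ‖z t‖) :=
          le_mul_of_one_le_left hr (by linarith)

theorem abs_periodNorm_modulatedWave_sub_mul_cos_le (hs : 1 ≤ s)
    (hper : Function.Periodic z (2 * π)) (hz : ∀ t, HasDerivAt z (z' t) t) (hM0 : 0 ≤ M)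
    (hM : ∀ t, ‖z' t‖ ≤ M * ‖z t‖) (γ : ℝ) {n : ℕ} (hn : n ≠ 0) :
    |periodNorm s (modulatedWave z n γ) -
        periodNorm s (fun t => ‖z t‖) * (periodNorm s cos / (2 * π) ^ (1 / s.toReal))| ≤
      4 * π * (periodNorm s (fun t => ‖z t‖) * M / n) := by
  have hcont : Continuous z := continuous_iff_continuousAt.2 fun t => (hz t).continuousAt
  have hn0 : (0 : ℝ) < n := by positivity
  have hr := periodNorm_nonneg s fun t => ‖z t‖
  obtain ⟨θ, ⟨hγθ, hθγ⟩, hθ⟩ :=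
    exists_periodNorm_modulatedWave_eq (zero_lt_one.trans_le hs).ne' hcont n γ
  have hτ : 0 ≤ (θ - γ) / n := div_nonneg (sub_nonneg.2 hγθ) hn0.le
  have hshift := abs_periodNorm_modulatedWave_sub_le hs hper hz hM0 hM n γ hτ
  rw [mul_div_cancel₀ _ hn0.ne', add_sub_cancel, hθ] at hshift
  calc _ ≤ 2 * (M * ((θ - γ) / n)) * periodNorm s (fun t => ‖z t‖) := hshift
    _ ≤ 2 * (M * (2 * π / n)) * periodNorm s (fun t => ‖z t‖) := by
        gcongr
        linarith
    _ = 4 * π * (periodNorm s (fun t => ‖z t‖) * M / n) := by ring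

end ModulatedWave

lemma exists_abs_le_and_eq_mul_of_abs_le {x y C : ℝ} (hC : 0 ≤ C) (h : |x| ≤ C * |y|) :
    ∃ δ, |δ| ≤ C ∧ x = δ * y := by
  rcases eq_or_ne y 0 with rfl | hy
  · exact ⟨0, by simpa using hC, by simpa using h⟩
  · exact ⟨x / y, by rwa [abs_div, div_le_iff₀ (abs_pos.2 hy)], (div_mul_cancel₀ x hy).symm⟩

theorem statement6_general (s : ℝ≥0∞) (hs : 1 ≤ s) (g h : ℝ → ℝ)
    (hgper : ∀ t, g (t + 2 * π) = g t) (hhper : ∀ t, h (t + 2 * π) = h t)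
    (hg : Differentiable ℝ g) (hh : Differentiable ℝ h)
    (hr : ∀ t, Real.sqrt (g t ^ 2 + h t ^ 2) ≠ 0)
    (hMb : BddAbove (Set.range fun t =>
      Real.sqrt (deriv g t ^ 2 + deriv h t ^ 2) / Real.sqrt (g t ^ 2 + h t ^ 2)))
    (M : ℝ)
    (hM : M = ⨆ t : ℝ, Real.sqrt (deriv g t ^ 2 + deriv h t ^ 2) / Real.sqrt (g t ^ 2 + h t ^ 2))
    (γ : ℝ) (n : ℕ) (hn1 : 1 ≤ n) :
    ∃ δ : ℝ, |δ| ≤ 4 * π ∧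
      periodNorm s (fun t => g t * Real.cos (n * t + γ) + h t * Real.sin (n * t + γ)) =
        periodNorm s (fun t => Real.sqrt (g t ^ 2 + h t ^ 2)) *
          (periodNorm s Real.cos / (2 * π) ^ (1 / s.toReal) + δ * M / n) := by
  have hle (t : ℝ) : √(deriv g t ^ 2 + deriv h t ^ 2) / √(g t ^ 2 + h t ^ 2) ≤ M :=
    hM ▸ le_ciSup hMb t
  have hM0 : 0 ≤ M := le_trans (by positivity) (hle 0)
  have hz (t : ℝ) : HasDerivAt (fun x => (g x + h x * Complex.I : ℂ))
      (deriv g t + deriv h t * Complex.I) t :=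
    (hg t).hasDerivAt.ofReal_comp.add ((hh t).hasDerivAt.ofReal_comp.mul_const _)
  have hbound (t : ℝ) :
      ‖(deriv g t + deriv h t * Complex.I : ℂ)‖ ≤ M * ‖(g t + h t * Complex.I : ℂ)‖ := by
    rw [Complex.norm_add_mul_I, Complex.norm_add_mul_I]
    exact (div_le_iff₀ (by positivity [hr t])).1 (hle t)
  have hest := abs_periodNorm_modulatedWave_sub_mul_cos_le hs
    (fun t => by simp only [hgper, hhper]) hz hM0 hbound γ (Nat.one_le_iff_ne_zero.1 hn1)
  simp only [modulatedWave_ofReal_add_mul_I, Complex.norm_add_mul_I] at hest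
  obtain ⟨δ, hδ, hdiff⟩ := exists_abs_le_and_eq_mul_of_abs_le (C := 4 * π) (by positivity)
    (hest.trans (by gcongr; exact le_abs_self _))
  exact ⟨δ, hδ, by linear_combination hdiff⟩

theorem statement6 (s : ℝ≥0∞) (hs : 1 ≤ s) (g h : ℝ → ℝ)
    (hgper : ∀ t, g (t + 2 * π) = g t) (hhper : ∀ t, h (t + 2 * π) = h t)
    (hg : Differentiable ℝ g) (hh : Differentiable ℝ h)
    (hr : ∀ t, Real.sqrt (g t ^ 2 + h t ^ 2) ≠ 0)
    (hMb : BddAbove (Set.range fun t =>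
      Real.sqrt (deriv g t ^ 2 + deriv h t ^ 2) / Real.sqrt (g t ^ 2 + h t ^ 2)))
    (M : ℝ)
    (hM : M = ⨆ t : ℝ, Real.sqrt (deriv g t ^ 2 + deriv h t ^ 2) / Real.sqrt (g t ^ 2 + h t ^ 2))
    (γ : ℝ) (n : ℕ) (hn1 : 1 ≤ n)
    (hn : s ≠ ∞ → 4 * π * s.toReal * M ≤ (n : ℝ)) :
    ∃ δ : ℝ, |δ| < 14 * π ∧
      periodNorm s (fun t => g t * Real.cos (n * t + γ) + h t * Real.sin (n * t + γ)) =
        periodNorm s (fun t => Real.sqrt (g t ^ 2 + h t ^ 2)) *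
          (periodNorm s Real.cos / (2 * π) ^ (1 / s.toReal) + δ * M / n) := by
  obtain ⟨δ, hδ, hnorm⟩ := statement6_general s hs g h hgper hhper hg hh hr hMb M hM γ n hn1
  exact ⟨δ, by linarith [pi_pos], hnorm⟩
end

section
/- Let γ>0, r>0, δ∈ℝ and m ≥ 1 with m ≥ (14|δ+1−r|/(γr))^{1/r}. Then ∫_m^∞ e^{-γ t^r} t^δ dt = (e^{-γ m^r}/(γ r)) m^{δ+1−r} (1 + Θ · (|δ+1−r|/(γr)) m^{-r}), where |Θ| ≤ 14/13. In particular, under the same hypothesis, ∫_m^∞ e^{-γ t^r} t^δ dt ≤ (14/13) (e^{-γ m^r}/(γ r)) m^{δ+1−r}. -/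
open MeasureTheory Real

/-!
Write `I` for the integral, `a = δ + 1 - r`, and `G = e^{-γ m^r} m^a / (γ r)`. Integrating the
derivative of `e^{-γ t^r} t^a` over `(m, ∞)` gives `I - G = a / (γ r) * ∫ e^{-γ t^r} t^{δ - r}`, and
`t^{-r} ≤ m^{-r}` on that range, so `|I - G| ≤ x I` with `x = |a| / (γ r) * m^{-r}`. If `K x ≤ 1`
for some `K > 1`, the error is absorbed into the left side: `I ≤ K / (K - 1) * G`. Inserting this
in the error bound gives `|I - G| ≤ K / (K - 1) * (G x)`.
-/

section RealInequalities

theorem exists_abs_le_and_eq_mul {C y z : ℝ} (hC : 0 ≤ C) (h : |y| ≤ C * |z|) :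
    ∃ Θ, |Θ| ≤ C ∧ y = Θ * z := by
  refine ⟨y / z, ?_, ?_⟩
  · rw [abs_div]
    exact div_le_of_le_mul₀ (abs_nonneg z) hC h
  · refine (div_mul_cancel_of_imp fun hz => ?_).symm
    simpa [hz] using h

theorem le_div_sub_one_mul_of_sub_le_mul {K x I G : ℝ} (hK : 1 < K) (hKx : K * x ≤ 1) (hI : 0 ≤ I)
    (h : I - G ≤ x * I) : I ≤ K / (K - 1) * G := by
  have hK1 : 0 < K - 1 := sub_pos.2 hK
  rw [div_mul_eq_mul_div, le_div_iff₀ hK1]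
  have hKI : K * (I - G) ≤ I :=
    calc K * (I - G) ≤ K * (x * I) := by gcongr
      _ = K * x * I := by ring
      _ ≤ I := mul_le_of_le_one_left hI hKx
  linarith

theorem mul_rpow_neg_le_one_of_rpow_one_div_le {b m r : ℝ} (hb : 0 ≤ b) (hm : 0 < m) (hr : 0 < r)
    (h : b ^ (1 / r) ≤ m) : b * m ^ (-r) ≤ 1 := by
  rw [one_div, rpow_inv_le_iff_of_pos hb hm.le hr] at h
  rw [rpow_neg hm.le, ← div_eq_mul_inv]
  exact div_le_one_of_le₀ h (rpow_nonneg hm.le r)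

end RealInequalities

section TailIntegral

variable {γ r m : ℝ}

theorem integrableOn_exp_neg_mul_rpow_mul_rpow_Ioi (hγ : 0 < γ) (hr : 0 < r) (hm : 0 < m) (s : ℝ) :
    IntegrableOn (fun t => exp (-γ * t ^ r) * t ^ s) (Set.Ioi m) := by
  have hdom : IntegrableOn (fun t => m ^ (s - max s 0) * (t ^ max s 0 * exp (-γ * t ^ r)))
      (Set.Ioi m) :=
    ((integrableOn_rpow_mul_exp_neg_mul_rpow (neg_one_lt_zero.trans_le (le_max_right s 0)) hr
      hγ).mono_set (Set.Ioi_subset_Ioi hm.le)).const_mul _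
  refine hdom.mono' (by fun_prop) ((ae_restrict_mem measurableSet_Ioi).mono fun t ht => ?_)
  have ht0 : 0 < t := hm.trans ht
  rw [norm_of_nonneg (by positivity)]
  calc exp (-γ * t ^ r) * t ^ s
      = t ^ (s - max s 0) * (t ^ max s 0 * exp (-γ * t ^ r)) := by
        rw [← mul_assoc, ← rpow_add ht0, sub_add_cancel, mul_comm]
    _ ≤ m ^ (s - max s 0) * (t ^ max s 0 * exp (-γ * t ^ r)) := by
        gcongr ?_ * _
        exact rpow_le_rpow_of_nonpos hm (le_of_lt ht) (sub_nonpos.2 (le_max_left s 0))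

theorem hasDerivAt_exp_neg_mul_rpow_mul_rpow (γ r s : ℝ) {x : ℝ} (hx : 0 < x) :
    HasDerivAt (fun t => exp (-γ * t ^ r) * t ^ s)
      (s * (exp (-γ * x ^ r) * x ^ (s - 1)) - γ * r * (exp (-γ * x ^ r) * x ^ (s + r - 1))) x := by
  have hexp := ((hasDerivAt_rpow_const (p := r) (Or.inl hx.ne')).const_mul (-γ)).exp
  have hpow := hasDerivAt_rpow_const (p := s) (Or.inl hx.ne')
  refine (hexp.mul hpow).congr_deriv ?_
  rw [add_sub_assoc, rpow_add hx]
  ring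

theorem mul_integral_Ioi_exp_neg_mul_rpow_mul_rpow (hγ : 0 < γ) (hr : 0 < r) (hm : 0 < m) (δ : ℝ) :
    γ * r * ∫ t in Set.Ioi m, exp (-γ * t ^ r) * t ^ δ =
      exp (-γ * m ^ r) * m ^ (δ + 1 - r) +
        (δ + 1 - r) * ∫ t in Set.Ioi m, exp (-γ * t ^ r) * t ^ (δ - r) := by
  have hint := integrableOn_exp_neg_mul_rpow_mul_rpow_Ioi hγ hr hm
  have hderiv : ∀ x ∈ Set.Ici m, HasDerivAt (fun t => exp (-γ * t ^ r) * t ^ (δ + 1 - r))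
      ((δ + 1 - r) * (exp (-γ * x ^ r) * x ^ (δ - r)) - γ * r * (exp (-γ * x ^ r) * x ^ δ)) x := by
    intro x hx
    convert hasDerivAt_exp_neg_mul_rpow_mul_rpow γ r (δ + 1 - r) (hm.trans_le hx) using 5 <;> ring
  have hint_lower := (hint (δ - r)).const_mul (δ + 1 - r)
  have hint_main := (hint δ).const_mul (γ * r)
  have hlim := tendsto_zero_of_hasDerivAt_of_integrableOn_Ioi
    (fun x hx => hderiv x (Set.Ioi_subset_Ici_self hx)) (hint_lower.sub hint_main)
    (hint (δ + 1 - r))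
  have hftc := integral_Ioi_of_hasDerivAt_of_tendsto' hderiv (hint_lower.sub hint_main) hlim
  rw [integral_sub hint_lower hint_main, integral_const_mul, integral_const_mul] at hftc
  linarith

theorem integral_Ioi_exp_neg_mul_rpow_mul_rpow_nonneg (γ r s : ℝ) (hm : 0 ≤ m) :
    0 ≤ ∫ t in Set.Ioi m, exp (-γ * t ^ r) * t ^ s :=
  setIntegral_nonneg measurableSet_Ioi fun _ ht =>
    mul_nonneg (exp_nonneg _) (rpow_nonneg (hm.trans (le_of_lt ht)) s)

theorem integral_Ioi_exp_neg_mul_rpow_mul_rpow_sub_le (hγ : 0 < γ) (hr : 0 < r) (hm : 0 < m)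
    (s : ℝ) {p : ℝ} (hp : 0 ≤ p) :
    ∫ t in Set.Ioi m, exp (-γ * t ^ r) * t ^ (s - p) ≤
      m ^ (-p) * ∫ t in Set.Ioi m, exp (-γ * t ^ r) * t ^ s := by
  have hint := integrableOn_exp_neg_mul_rpow_mul_rpow_Ioi hγ hr hm
  rw [← integral_const_mul]
  refine setIntegral_mono_on (hint _) ((hint s).const_mul _) measurableSet_Ioi fun t ht => ?_
  have ht0 : 0 < t := hm.trans ht
  calc exp (-γ * t ^ r) * t ^ (s - p) = t ^ (-p) * (exp (-γ * t ^ r) * t ^ s) := by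
        rw [sub_eq_add_neg, rpow_add ht0]
        ring
    _ ≤ m ^ (-p) * (exp (-γ * t ^ r) * t ^ s) := by
        gcongr ?_ * _
        exact rpow_le_rpow_of_nonpos hm (le_of_lt ht) (neg_nonpos.2 hp)

theorem abs_integral_Ioi_exp_neg_mul_rpow_mul_rpow_sub_le (hγ : 0 < γ) (hr : 0 < r) (hm : 0 < m)
    (δ : ℝ) :
    |(∫ t in Set.Ioi m, exp (-γ * t ^ r) * t ^ δ) -
        exp (-γ * m ^ r) / (γ * r) * m ^ (δ + 1 - r)| ≤
      |δ + 1 - r| / (γ * r) * m ^ (-r) * ∫ t in Set.Ioi m, exp (-γ * t ^ r) * t ^ δ := by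
  have hγr : 0 < γ * r := mul_pos hγ hr
  have herror : (∫ t in Set.Ioi m, exp (-γ * t ^ r) * t ^ δ) -
      exp (-γ * m ^ r) / (γ * r) * m ^ (δ + 1 - r) =
        (δ + 1 - r) / (γ * r) * ∫ t in Set.Ioi m, exp (-γ * t ^ r) * t ^ (δ - r) := by
    have hparts := mul_integral_Ioi_exp_neg_mul_rpow_mul_rpow hγ hr hm δ
    rw [eq_div_of_mul_eq hγr.ne' ((mul_comm _ _).trans hparts)]
    ring
  rw [herror, abs_mul, abs_div, abs_of_pos hγr, mul_assoc,
    abs_of_nonneg (integral_Ioi_exp_neg_mul_rpow_mul_rpow_nonneg γ r (δ - r) hm.le)]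
  gcongr
  exact integral_Ioi_exp_neg_mul_rpow_mul_rpow_sub_le hγ hr hm δ hr.le

end TailIntegral

theorem statement10_general (γ r δ m K : ℝ) (hγ : 0 < γ) (hr : 0 < r) (hm0 : 0 < m) (hK : 1 < K)
    (hm : (K * |δ + 1 - r| / (γ * r)) ^ (1 / r) ≤ m) :
    ∃ Θ : ℝ, |Θ| ≤ K / (K - 1) ∧
      (∫ t in Set.Ioi m, exp (-γ * t ^ r) * t ^ δ) =
        exp (-γ * m ^ r) / (γ * r) * m ^ (δ + 1 - r) *
          (1 + Θ * (|δ + 1 - r| / (γ * r)) * m ^ (-r)) ∧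
      (∫ t in Set.Ioi m, exp (-γ * t ^ r) * t ^ δ) ≤
        K / (K - 1) * (exp (-γ * m ^ r) / (γ * r)) * m ^ (δ + 1 - r) := by
  have herror := abs_integral_Ioi_exp_neg_mul_rpow_mul_rpow_sub_le hγ hr hm0 δ
  have hnonneg := integral_Ioi_exp_neg_mul_rpow_mul_rpow_nonneg γ r δ hm0.le
  set I := ∫ t in Set.Ioi m, exp (-γ * t ^ r) * t ^ δ
  set G := exp (-γ * m ^ r) / (γ * r) * m ^ (δ + 1 - r) with hG
  set x := |δ + 1 - r| / (γ * r) * m ^ (-r) with hx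
  have hC : 0 ≤ K / (K - 1) := div_nonneg (by positivity) (sub_nonneg.2 hK.le)
  have hKx : K * x ≤ 1 := by
    rw [hx, ← mul_assoc, ← mul_div_assoc]
    exact mul_rpow_neg_le_one_of_rpow_one_div_le (by positivity) hm0 hr hm
  have hupper : I ≤ K / (K - 1) * G :=
    le_div_sub_one_mul_of_sub_le_mul hK hKx hnonneg ((le_abs_self _).trans herror)
  have hrel : |I - G| ≤ K / (K - 1) * |G * x| :=
    calc |I - G| ≤ x * I := herror
      _ ≤ x * (K / (K - 1) * G) := by gcongr
      _ = K / (K - 1) * |G * x| := by rw [abs_of_nonneg (by positivity)]; ring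
  obtain ⟨Θ, hΘ, hIG⟩ := exists_abs_le_and_eq_mul hC hrel
  refine ⟨Θ, hΘ, ?_, by rwa [mul_assoc, ← hG]⟩
  rw [mul_assoc Θ, ← hx]
  linear_combination hIG

theorem statement10 (γ r δ m : ℝ) (hγ : 0 < γ) (hr : 0 < r) (hm1 : 1 ≤ m)
    (hm : (14 * |δ + 1 - r| / (γ * r)) ^ (1 / r) ≤ m) :
    ∃ Θ : ℝ, |Θ| ≤ 14 / 13 ∧
      (∫ t in Set.Ioi m, Real.exp (-γ * t ^ r) * t ^ δ) =
        Real.exp (-γ * m ^ r) / (γ * r) * m ^ (δ + 1 - r) *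
          (1 + Θ * (|δ + 1 - r| / (γ * r)) * m ^ (-r)) ∧
      (∫ t in Set.Ioi m, Real.exp (-γ * t ^ r) * t ^ δ) ≤
        14 / 13 * (Real.exp (-γ * m ^ r) / (γ * r)) * m ^ (δ + 1 - r) := by
  have h14 : (14 / 13 : ℝ) = 14 / (14 - 1) := by norm_num
  exact h14 ▸ statement10_general γ r δ m 14 hγ hr (by positivity) (by norm_num) hm
end

section
/- Let α>0, 0<r<1, 1≤p≤∞. For t∈[−π,π] and integers n ≥ n₂(α,r,p), the function Q_n(t) := 2 Σ_{j=n}^∞ e^{-α j^r} ∫_0^∞ e^{-α(j+u)^r} cos(ut) du satisfies Q_n(t) = (e^{-2α n^r}/(t² + (αr n^{r-1})²)) · (1 + Θ(t) · ((1−r)/(αr) · n^{-r} + αr · n^{-(1-r)})), where |Θ(t)| < 5. In particular Q_n(t) > 0 for all t∈[−π,π] and n ≥ n₂(α,r,p). -/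
open MeasureTheory Real Filter
open scoped ENNReal

/-- `n₂(α,r,p)`: the smallest positive integer `n` with
`(1/(αr)) n^{-r} + αr χ(p) n^{-(1-r)} ≤ 1/14`, where `χ(p)=p` for finite `p` and `χ(∞)=1`. -/
noncomputable def n₂ (α r : ℝ) (p : ℝ≥0∞) : ℕ :=
  sInf {n : ℕ | 0 < n ∧
    1 / (α * r) * (n : ℝ) ^ (-r) +
      α * r * (if p = ∞ then 1 else p.toReal) * (n : ℝ) ^ (-(1 - r)) ≤ 1 / 14}

/-- `Q_n(t) = 2 Σ_{j=n}^∞ e^{-α j^r} ∫_0^∞ e^{-α(j+u)^r} cos(ut) du`. -/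
noncomputable def Qn (α r : ℝ) (n : ℕ) (t : ℝ) : ℝ :=
  2 * ∑' j : ℕ, Real.exp (-α * ((j + n : ℕ) : ℝ) ^ r) *
    ∫ u in Set.Ioi (0 : ℝ), Real.exp (-α * (((j + n : ℕ) : ℝ) + u) ^ r) * Real.cos (u * t)

/-- `R_n(t) = 2 Σ_{k=1}^∞ Σ_{j=n}^∞ e^{-α j^r} ∫_0^∞ e^{-α(j+u)^r}(cos((t−2πk)u)+cos((t+2πk)u))du`. -/
noncomputable def Rn (α r : ℝ) (n : ℕ) (t : ℝ) : ℝ :=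
  2 * ∑' k : ℕ, ∑' j : ℕ, Real.exp (-α * ((j + n : ℕ) : ℝ) ^ r) *
    ∫ u in Set.Ioi (0 : ℝ), Real.exp (-α * (((j + n : ℕ) : ℝ) + u) ^ r) *
      (Real.cos ((t - 2 * π * ((k : ℝ) + 1)) * u) + Real.cos ((t + 2 * π * ((k : ℝ) + 1)) * u))

/-!
Write `φ x = α x ^ r` and `ψ = φ'`. What matters is that `1 / ψ` varies slowly:
`|ψ'| ≤ δ ψ ^ 2` on `[n, ∞)`, with `δ = |1 - r| / (α r) * n ^ (-r)`. One integration by parts gives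
`∫ e^{-φ + itx} = e^{-φ + itx} / (ψ - it)` up to an error of relative order `δ`; taking real parts
turns `Q_n(t)` into the sum over integers `x ≥ n` of `2 e^{-2φ} ψ / (t ^ 2 + ψ ^ 2)`. This summand
is decreasing and, up to a factor `1 ± δ`, is minus the derivative of `e^{-2φ} / (t ^ 2 + ψ ^ 2)`;
so the sum telescopes to `e^{-2φ(n)} / (t ^ 2 + ψ(n) ^ 2)`, with errors of relative order `δ` and,
from the first summand, `ψ(n)`.
-/

lemma summable_and_tsum_bounds_of_telescoping {G m : ℕ → ℝ} {c C : ℝ} (hc : 0 < c)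
    (hG : ∀ j, 0 ≤ G j) (hm : ∀ j, 0 ≤ m j) (hlim : Tendsto m atTop (nhds 0))
    (lower : ∀ j, c * G (j + 1) ≤ m j - m (j + 1)) (upper : ∀ j, m j - m (j + 1) ≤ C * G j) :
    Summable G ∧ m 0 ≤ C * ∑' j, G j ∧ c * (∑' j, G j - G 0) ≤ m 0 := by
  have partial_sum_le : ∀ k, ∑ i ∈ Finset.range k, G (i + 1) ≤ m 0 / c := by
    intro k
    rw [le_div_iff₀' hc, Finset.mul_sum]
    calc ∑ i ∈ Finset.range k, c * G (i + 1)
        ≤ ∑ i ∈ Finset.range k, (m i - m (i + 1)) := Finset.sum_le_sum fun i _ => lower i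
      _ = m 0 - m k := Finset.sum_range_sub' m k
      _ ≤ m 0 := sub_le_self _ (hm k)
  have summable_G : Summable G := (summable_nat_add_iff 1).1 <|
    summable_of_sum_range_le (fun i => hG (i + 1)) partial_sum_le
  refine ⟨summable_G, ?_, ?_⟩
  · have hm0 : Tendsto (fun k => m 0 - m k) atTop (nhds (m 0)) := by
      simpa using tendsto_const_nhds.sub hlim
    refine le_of_tendsto_of_tendsto' hm0 (summable_G.hasSum.tendsto_sum_nat.const_mul C) fun k => ?_
    rw [← Finset.sum_range_sub' m k, Finset.mul_sum]
    exact Finset.sum_le_sum fun i _ => upper i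
  · rw [summable_G.tsum_eq_zero_add, add_sub_cancel_left, ← le_div_iff₀' hc]
    exact Real.tsum_le_of_sum_range_le (fun i => hG (i + 1)) partial_sum_le

lemma abs_tsum_sub_tsum_le {F G : ℕ → ℝ} {c : ℝ} (hG : Summable G)
    (h : ∀ j, |F j - G j| ≤ c * G j) : |∑' j, F j - ∑' j, G j| ≤ c * ∑' j, G j := by
  have summable_sub : Summable fun j => F j - G j := .of_norm_bounded (hG.mul_left c) h
  have summable_F : Summable F := by simpa using summable_sub.add hG
  rw [← summable_F.tsum_sub hG, ← tsum_mul_left]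
  exact tsum_of_norm_bounded (f := fun j => F j - G j) (hG.mul_left c).hasSum h

lemma abs_sub_le_three_mul {T S m δ b : ℝ} (hm : 0 < m) (hδ : 0 ≤ δ) (hb : 0 ≤ b)
    (hδb : δ + b ≤ 1 / 14) (m_le : m ≤ (1 + δ) * S) (le_m : (1 - δ) * (S - 2 * b * m) ≤ m)
    (hTS : |T - S| ≤ δ / (1 - δ) * S) : |T - m| ≤ 3 * (δ + b) * m := by
  have h1δ : 0 < 1 - δ := by linarith
  have inv_le : 1 / (1 - δ) ≤ 1 + 14 / 13 * δ := by
    rw [div_le_iff₀ h1δ]; nlinarith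
  have ratio_le : δ / (1 - δ) ≤ 14 / 13 * δ := by
    rw [div_le_iff₀ h1δ]; nlinarith
  have S_le : S ≤ m * (1 + 14 / 13 * δ + 2 * b) := by
    have : S - 2 * b * m ≤ m * (1 / (1 - δ)) := by
      rwa [mul_one_div, le_div_iff₀' h1δ]
    nlinarith
  have S_nonneg : 0 ≤ S :=
    (pos_of_mul_pos_right (hm.trans_le m_le) (by linarith : (0 : ℝ) ≤ 1 + δ)).le
  have le_S : m * (1 - δ) ≤ S :=
    calc m * (1 - δ) ≤ (1 + δ) * S * (1 - δ) := by gcongr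
      _ = S - δ ^ 2 * S := by ring
      _ ≤ S := sub_le_self _ (by positivity)
  have hTS' : |T - S| ≤ 14 / 13 * δ * S := hTS.trans (by gcongr)
  obtain ⟨hT₁, hT₂⟩ := abs_le.1 hTS'
  refine abs_le.2 ⟨?_, ?_⟩
  · have : m * (1 - δ) * (1 - 14 / 13 * δ) ≤ S * (1 - 14 / 13 * δ) := by
      gcongr; linarith
    nlinarith [mul_nonneg hm.le hδ, mul_nonneg hm.le hb, mul_nonneg hm.le (mul_nonneg hδ hδ)]
  · have hT : T ≤ m * (1 + 14 / 13 * δ + 2 * b) * (1 + 14 / 13 * δ) :=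
      calc T ≤ S * (1 + 14 / 13 * δ) := by linarith
        _ ≤ _ := by gcongr
    have : (1 + 14 / 13 * δ + 2 * b) * (1 + 14 / 13 * δ) ≤ 1 + 3 * (δ + b) := by nlinarith
    nlinarith

lemma norm_cexp_neg_add_mul_I (a b c : ℝ) :
    ‖Complex.exp (-a + b * c * Complex.I)‖ = exp (-a) := by
  simp [Complex.norm_exp]

lemma norm_sub_mul_I_sq (a b : ℝ) : ‖(a - b * Complex.I : ℂ)‖ ^ 2 = b ^ 2 + a ^ 2 := by
  rw [Complex.sq_norm, sub_eq_add_neg, ← neg_mul, ← Complex.ofReal_neg, Complex.normSq_add_mul_I]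
  ring

/-- A phase `φ` tending to infinity whose derivative `ψ` is positive on `[N, ∞)` and such that
`1 / ψ` has derivative at most `δ < 1` in absolute value there, written as `|ψ'| ≤ δ ψ ^ 2`. -/
structure SlowPhase (φ ψ : ℝ → ℝ) (N δ : ℝ) : Prop where
  hasDerivAt : ∀ {x}, N ≤ x → HasDerivAt φ (ψ x) x
  differentiableAt : ∀ {x}, N ≤ x → DifferentiableAt ℝ ψ x
  pos : ∀ {x}, N ≤ x → 0 < ψ x
  abs_deriv_le : ∀ {x}, N ≤ x → |deriv ψ x| ≤ δ * ψ x ^ 2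
  lt_one : δ < 1
  tendsto_atTop : Tendsto φ atTop atTop

/-- For `k = 1`, the leading term of `∫ u in Ioi 0, exp (-φ (x + u)) * cos (u * t)`; for `k = 2`,
half the leading term of the `x`-th summand of `Q_n(t)`. -/
noncomputable def leadingTerm (φ ψ : ℝ → ℝ) (k t x : ℝ) : ℝ :=
  exp (-(k * φ x)) * (ψ x / (t ^ 2 + ψ x ^ 2))

/-- The leading term of the sum of `2 * leadingTerm φ ψ 2 t` over `x, x + 1, …`. -/
noncomputable def tailMass (φ ψ : ℝ → ℝ) (t x : ℝ) : ℝ :=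
  exp (-(2 * φ x)) / (t ^ 2 + ψ x ^ 2)

namespace SlowPhase

variable {φ ψ : ℝ → ℝ} {N δ x : ℝ}

lemma nonneg (H : SlowPhase φ ψ N δ) : 0 ≤ δ :=
  nonneg_of_mul_nonneg_left ((abs_nonneg _).trans (H.abs_deriv_le le_rfl))
    (pow_pos (H.pos le_rfl) 2)

lemma comp_const_add (H : SlowPhase φ ψ N δ) (hx : N ≤ x) :
    SlowPhase (fun u => φ (x + u)) (fun u => ψ (x + u)) 0 δ where
  hasDerivAt hu := (H.hasDerivAt (le_add_of_le_of_nonneg hx hu)).comp_const_add x _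
  differentiableAt hu :=
    ((H.differentiableAt (le_add_of_le_of_nonneg hx hu)).hasDerivAt.comp_const_add
      x _).differentiableAt
  pos hu := H.pos (le_add_of_le_of_nonneg hx hu)
  abs_deriv_le hu := by
    rw [deriv_comp_const_add]
    exact H.abs_deriv_le (le_add_of_le_of_nonneg hx hu)
  lt_one := H.lt_one
  tendsto_atTop := H.tendsto_atTop.comp (tendsto_atTop_add_const_left _ x tendsto_id)

lemma hasDerivAt_exp_neg_div (H : SlowPhase φ ψ N δ) (k : ℝ) (hx : N ≤ x) :
    HasDerivAt (fun y => exp (-(k * φ y)) / ψ y)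
      (-(exp (-(k * φ x)) * (k + deriv ψ x / ψ x ^ 2))) x := by
  have ψ_ne := (H.pos hx).ne'
  refine ((((H.hasDerivAt hx).const_mul k).neg.exp).div
    (H.differentiableAt hx).hasDerivAt ψ_ne).congr_deriv ?_
  simp only [Pi.neg_apply]
  field_simp
  ring

lemma neg_le_deriv_div_sq (H : SlowPhase φ ψ N δ) (hx : N ≤ x) : -δ ≤ deriv ψ x / ψ x ^ 2 := by
  rw [le_div_iff₀ (pow_pos (H.pos hx) 2), neg_mul]
  exact (abs_le.1 (H.abs_deriv_le hx)).1

lemma antitoneOn_exp_neg_mul_div (H : SlowPhase φ ψ N δ) :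
    AntitoneOn (fun x => exp (-(δ * φ x)) / ψ x) (Set.Ici N) := by
  refine antitoneOn_of_hasDerivWithinAt_nonpos (convex_Ici N)
    (fun x hx => (H.hasDerivAt_exp_neg_div δ hx).continuousAt.continuousWithinAt)
    (fun x hx => (H.hasDerivAt_exp_neg_div δ (interior_subset hx)).hasDerivWithinAt)
    fun x hx => ?_
  have := H.neg_le_deriv_div_sq (interior_subset hx)
  exact neg_nonpos.2 (mul_nonneg (exp_pos _).le (by linarith))

/- `1 / ψ` grows at most like `exp (δ φ)`, and `δ < 1`. -/
lemma tendsto_exp_neg_div (H : SlowPhase φ ψ N δ) :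
    Tendsto (fun x => exp (-φ x) / ψ x) atTop (nhds 0) := by
  have exp_lim : Tendsto (fun x => exp (-((1 - δ) * φ x))) atTop (nhds 0) :=
    tendsto_exp_neg_atTop_nhds_zero.comp
      (H.tendsto_atTop.const_mul_atTop (sub_pos.2 H.lt_one))
  have bound_lim := exp_lim.mul_const (exp (-(δ * φ N)) / ψ N)
  rw [zero_mul] at bound_lim
  refine squeeze_zero' ?_ ?_ bound_lim
  · filter_upwards [eventually_ge_atTop N] with x hx
    exact div_nonneg (exp_pos _).le (H.pos hx).le
  · filter_upwards [eventually_ge_atTop N] with x hx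
    calc exp (-φ x) / ψ x
        = exp (-((1 - δ) * φ x)) * (exp (-(δ * φ x)) / ψ x) := by
          rw [← mul_div_assoc, ← exp_add]; ring_nf
      _ ≤ _ := by
          refine mul_le_mul_of_nonneg_left ?_ (exp_pos _).le
          exact H.antitoneOn_exp_neg_mul_div Set.self_mem_Ici hx hx

lemma continuousOn (H : SlowPhase φ ψ N δ) : ContinuousOn φ (Set.Ioi N) :=
  fun _ hx => (H.hasDerivAt (le_of_lt hx)).continuousAt.continuousWithinAt

lemma continuousOn_deriv (H : SlowPhase φ ψ N δ) : ContinuousOn ψ (Set.Ioi N) :=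
  fun _ hx => (H.differentiableAt (le_of_lt hx)).continuousAt.continuousWithinAt

lemma integrableOn_exp_neg (H : SlowPhase φ ψ N δ) :
    IntegrableOn (fun x => exp (-φ x)) (Set.Ioi N) := by
  have h1δ : 0 < 1 - δ := sub_pos.2 H.lt_one
  have exp_le : ∀ x ∈ Set.Ioi N,
      (1 - δ) * exp (-φ x) ≤ exp (-(1 * φ x)) * (1 + deriv ψ x / ψ x ^ 2) := by
    intro x hx
    rw [one_mul, mul_comm]
    gcongr
    linarith [H.neg_le_deriv_div_sq (le_of_lt hx)]
  have deriv_integrable := integrableOn_Ioi_deriv_of_nonpos'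
    (fun x hx => H.hasDerivAt_exp_neg_div 1 hx)
    (fun x hx => neg_nonpos.2 <| (mul_pos h1δ (exp_pos _)).le.trans (exp_le x hx))
    (by simpa only [one_mul] using H.tendsto_exp_neg_div)
  refine (deriv_integrable.neg.const_mul (1 - δ)⁻¹).mono'
    (H.continuousOn.neg.rexp.aestronglyMeasurable measurableSet_Ioi)
    (ae_restrict_of_forall_mem measurableSet_Ioi fun x hx => ?_)
  rw [norm_of_nonneg (exp_pos _).le, Pi.neg_apply, neg_neg, le_inv_mul_iff₀ h1δ]
  exact exp_le x hx

section LeadingTerm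

variable {k t : ℝ}

lemma sq_add_sq_pos (H : SlowPhase φ ψ N δ) (hx : N ≤ x) : 0 < t ^ 2 + ψ x ^ 2 := by
  have := H.pos hx
  positivity

lemma leadingTerm_pos (H : SlowPhase φ ψ N δ) (hx : N ≤ x) : 0 < leadingTerm φ ψ k t x :=
  mul_pos (exp_pos _) (div_pos (H.pos hx) (H.sq_add_sq_pos hx))

lemma tailMass_pos (H : SlowPhase φ ψ N δ) (hx : N ≤ x) : 0 < tailMass φ ψ t x :=
  div_pos (exp_pos _) (H.sq_add_sq_pos hx)

lemma hasDerivAt_leadingTerm (H : SlowPhase φ ψ N δ) (hx : N ≤ x) :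
    HasDerivAt (leadingTerm φ ψ k t)
      (exp (-(k * φ x)) *
        (deriv ψ x * (t ^ 2 - ψ x ^ 2) / (t ^ 2 + ψ x ^ 2) ^ 2 -
          k * ψ x * (ψ x / (t ^ 2 + ψ x ^ 2)))) x := by
  have den_ne := (H.sq_add_sq_pos (t := t) hx).ne'
  have hψ := (H.differentiableAt hx).hasDerivAt
  refine (((H.hasDerivAt hx).const_mul k).neg.exp.mul
    (hψ.div ((hψ.pow 2).const_add (t ^ 2)) den_ne)).congr_deriv ?_
  simp only [Pi.neg_apply, Pi.div_apply, Pi.pow_apply]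
  field_simp
  ring

lemma deriv_leadingTerm_le (H : SlowPhase φ ψ N δ) (hx : N ≤ x) :
    deriv (leadingTerm φ ψ k t) x ≤ -((k - δ) * ψ x * leadingTerm φ ψ k t x) := by
  have abs_le_den : |t ^ 2 - ψ x ^ 2| ≤ t ^ 2 + ψ x ^ 2 :=
    abs_le.2 ⟨by linarith [sq_nonneg t], by linarith [sq_nonneg (ψ x)]⟩
  have key : deriv ψ x * (t ^ 2 - ψ x ^ 2) / (t ^ 2 + ψ x ^ 2) ^ 2 ≤
      δ * ψ x * (ψ x / (t ^ 2 + ψ x ^ 2)) :=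
    calc deriv ψ x * (t ^ 2 - ψ x ^ 2) / (t ^ 2 + ψ x ^ 2) ^ 2
        ≤ |deriv ψ x| * |t ^ 2 - ψ x ^ 2| / (t ^ 2 + ψ x ^ 2) ^ 2 := by
          rw [← abs_mul]; gcongr; exact le_abs_self _
      _ ≤ δ * ψ x ^ 2 * (t ^ 2 + ψ x ^ 2) / (t ^ 2 + ψ x ^ 2) ^ 2 := by
          have := (abs_nonneg _).trans (H.abs_deriv_le hx)
          gcongr
          exact H.abs_deriv_le hx
      _ = δ * ψ x * (ψ x / (t ^ 2 + ψ x ^ 2)) := by field_simp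
  rw [(H.hasDerivAt_leadingTerm hx).deriv]
  calc _ ≤ exp (-(k * φ x)) * (δ * ψ x * (ψ x / (t ^ 2 + ψ x ^ 2)) -
        k * ψ x * (ψ x / (t ^ 2 + ψ x ^ 2))) := by gcongr
    _ = _ := by rw [leadingTerm]; ring

lemma deriv_leadingTerm_nonpos (H : SlowPhase φ ψ N δ) (hk : 1 ≤ k) (hx : N ≤ x) :
    deriv (leadingTerm φ ψ k t) x ≤ 0 :=
  (H.deriv_leadingTerm_le hx).trans <| neg_nonpos.2 <|
    mul_nonneg (mul_nonneg (by linarith [H.lt_one]) (H.pos hx).le) (H.leadingTerm_pos hx).le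

lemma antitoneOn_leadingTerm (H : SlowPhase φ ψ N δ) (hk : 1 ≤ k) :
    AntitoneOn (leadingTerm φ ψ k t) (Set.Ici N) :=
  antitoneOn_of_deriv_nonpos (convex_Ici N)
    (fun _ hx => (H.hasDerivAt_leadingTerm hx).continuousAt.continuousWithinAt)
    (fun _ hx =>
      (H.hasDerivAt_leadingTerm (interior_subset hx)).differentiableAt.differentiableWithinAt)
    fun _ hx => H.deriv_leadingTerm_nonpos hk (interior_subset hx)

lemma tendsto_leadingTerm (H : SlowPhase φ ψ N δ) :
    Tendsto (leadingTerm φ ψ 1 t) atTop (nhds 0) := by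
  refine squeeze_zero' ?_ ?_ H.tendsto_exp_neg_div
  · filter_upwards [eventually_ge_atTop N] with x hx using (H.leadingTerm_pos hx).le
  · filter_upwards [eventually_ge_atTop N] with x hx
    have ψ_pos := H.pos hx
    rw [leadingTerm, one_mul, div_eq_mul_one_div (exp _)]
    refine mul_le_mul_of_nonneg_left ?_ (exp_pos _).le
    rw [div_le_div_iff₀ (H.sq_add_sq_pos hx) ψ_pos]
    nlinarith [sq_nonneg t]

lemma tendsto_tailMass (H : SlowPhase φ ψ N δ) : Tendsto (tailMass φ ψ t) atTop (nhds 0) := by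
  have bound_lim := H.tendsto_exp_neg_div.pow 2
  rw [zero_pow two_ne_zero] at bound_lim
  refine squeeze_zero' ?_ ?_ bound_lim
  · filter_upwards [eventually_ge_atTop N] with x hx using (H.tailMass_pos hx).le
  · filter_upwards [eventually_ge_atTop N] with x hx
    have ψ_pos := H.pos hx
    rw [tailMass, div_pow, ← exp_nat_mul, Nat.cast_ofNat, mul_neg]
    gcongr
    exact le_add_of_nonneg_left (sq_nonneg t)

lemma hasDerivAt_tailMass (H : SlowPhase φ ψ N δ) (hx : N ≤ x) :
    HasDerivAt (tailMass φ ψ t)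
      (-(2 * leadingTerm φ ψ 2 t x * (1 + deriv ψ x / (t ^ 2 + ψ x ^ 2)))) x := by
  have den_ne := (H.sq_add_sq_pos (t := t) hx).ne'
  have hψ := (H.differentiableAt hx).hasDerivAt
  refine (((H.hasDerivAt hx).const_mul 2).neg.exp.div
    ((hψ.pow 2).const_add (t ^ 2)) den_ne).congr_deriv ?_
  simp only [leadingTerm, Pi.neg_apply, Pi.pow_apply]
  field_simp
  ring

lemma abs_deriv_div_le (H : SlowPhase φ ψ N δ) (hx : N ≤ x) :
    |deriv ψ x / (t ^ 2 + ψ x ^ 2)| ≤ δ := by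
  have den_pos := H.sq_add_sq_pos (t := t) hx
  rw [abs_div, abs_of_pos den_pos, div_le_iff₀ den_pos]
  refine (H.abs_deriv_le hx).trans (mul_le_mul_of_nonneg_left ?_ H.nonneg)
  exact le_add_of_nonneg_left (sq_nonneg t)

lemma tailMass_sub_tailMass_mem_Icc (H : SlowPhase φ ψ N δ) (hx : N ≤ x) :
    tailMass φ ψ t x - tailMass φ ψ t (x + 1) ∈
      Set.Icc ((1 - δ) * (2 * leadingTerm φ ψ 2 t (x + 1)))
        ((1 + δ) * (2 * leadingTerm φ ψ 2 t x)) := by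
  obtain ⟨c, ⟨hxc, hcx⟩, hc⟩ := exists_hasDerivAt_eq_slope (tailMass φ ψ t) _ (lt_add_one x)
    (fun y hy => (H.hasDerivAt_tailMass (hx.trans hy.1)).continuousAt.continuousWithinAt)
    (fun y hy => H.hasDerivAt_tailMass (hx.trans hy.1.le))
  have hNc : N ≤ c := hx.trans hxc.le
  have slope : tailMass φ ψ t x - tailMass φ ψ t (x + 1) =
      (1 + deriv ψ c / (t ^ 2 + ψ c ^ 2)) * (2 * leadingTerm φ ψ 2 t c) := by
    rw [add_sub_cancel_left, div_one] at hc
    linarith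
  have anti := H.antitoneOn_leadingTerm (t := t) one_le_two
  have hright : leadingTerm φ ψ 2 t (x + 1) ≤ leadingTerm φ ψ 2 t c :=
    anti hNc (hNc.trans hcx.le) hcx.le
  have hleft : leadingTerm φ ψ 2 t c ≤ leadingTerm φ ψ 2 t x := anti hx hNc hxc.le
  have hpos_c := H.leadingTerm_pos (k := 2) (t := t) hNc
  have hpos_right := H.leadingTerm_pos (k := 2) (t := t) (hNc.trans hcx.le)
  have h1δ : 0 ≤ 1 - δ := sub_nonneg.2 H.lt_one.le
  have hδ := H.nonneg
  obtain ⟨hlo, hhi⟩ := abs_le.1 (H.abs_deriv_div_le (t := t) hNc)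
  rw [slope]
  constructor
  · exact mul_le_mul (by linarith) (by linarith) (by positivity) (by linarith)
  · gcongr

end LeadingTerm

section Oscillatory

open Complex (I)

variable {t : ℝ}

lemma sub_mul_I_ne_zero (H : SlowPhase φ ψ N δ) (hx : N ≤ x) : (ψ x - t * I : ℂ) ≠ 0 := by
  intro h
  have re_eq : ψ x = 0 := by simpa using congrArg Complex.re h
  exact (H.pos hx).ne' re_eq

lemma hasDerivAt_cexp_div (H : SlowPhase φ ψ N δ) (hx : N ≤ x) :
    HasDerivAt (fun y : ℝ => -(Complex.exp (-φ y + y * t * I) / (ψ y - t * I)))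
      (Complex.exp (-φ x + x * t * I) +
        Complex.exp (-φ x + x * t * I) / (ψ x - t * I) ^ 2 * deriv ψ x) x := by
  have den_ne := H.sub_mul_I_ne_zero (t := t) hx
  have hφ := (H.hasDerivAt hx).ofReal_comp
  have hψ := (H.differentiableAt hx).hasDerivAt.ofReal_comp
  have hid := ((hasDerivAt_id x).ofReal_comp.mul_const (t : ℂ)).mul_const I
  refine ((hφ.neg.add hid).cexp.div (hψ.sub_const (t * I)) den_ne).neg.congr_deriv ?_
  simp only [id_eq, Pi.add_apply, Pi.neg_apply, Complex.ofReal_one, one_mul]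
  field_simp
  ring

/- Dominating the error by an exact derivative makes the bound integrate in closed form. -/
lemma norm_integration_by_parts_error_le (H : SlowPhase φ ψ N δ) (hx : N ≤ x) :
    ‖Complex.exp (-φ x + x * t * I) / (ψ x - t * I) ^ 2 * deriv ψ x‖ ≤
      -(δ / (1 - δ)) * deriv (leadingTerm φ ψ 1 t) x := by
  have h1δ : 0 < 1 - δ := sub_pos.2 H.lt_one
  have hδ := H.nonneg
  rw [norm_mul, norm_div, norm_pow, norm_cexp_neg_add_mul_I, norm_sub_mul_I_sq,
    Complex.norm_real, Real.norm_eq_abs]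
  calc exp (-φ x) / (t ^ 2 + ψ x ^ 2) * |deriv ψ x|
      ≤ exp (-φ x) / (t ^ 2 + ψ x ^ 2) * (δ * ψ x ^ 2) := by
        gcongr
        exact H.abs_deriv_le hx
    _ = δ / (1 - δ) * ((1 - δ) * ψ x * leadingTerm φ ψ 1 t x) := by
        rw [leadingTerm, one_mul]
        field_simp
    _ ≤ δ / (1 - δ) * -deriv (leadingTerm φ ψ 1 t) x := by
        gcongr
        exact le_neg_of_le_neg (H.deriv_leadingTerm_le hx)
    _ = -(δ / (1 - δ)) * deriv (leadingTerm φ ψ 1 t) x := by ring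

lemma tendsto_cexp_div (H : SlowPhase φ ψ N δ) :
    Tendsto (fun y : ℝ => -(Complex.exp (-φ y + y * t * I) / (ψ y - t * I))) atTop (nhds 0) := by
  refine squeeze_zero_norm' ?_ H.tendsto_exp_neg_div
  filter_upwards [eventually_ge_atTop N] with y hy
  have ψ_pos := H.pos hy
  have ψ_le : ψ y ≤ ‖(ψ y - t * I : ℂ)‖ := by
    simpa using (Complex.re_le_norm (ψ y - t * I : ℂ))
  rw [norm_neg, norm_div, norm_cexp_neg_add_mul_I]
  gcongr

lemma continuousOn_cexp (H : SlowPhase φ ψ N δ) :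
    ContinuousOn (fun y : ℝ => Complex.exp (-φ y + y * t * I)) (Set.Ioi N) := by
  have := H.continuousOn
  fun_prop

lemma integrableOn_cexp (H : SlowPhase φ ψ N δ) :
    IntegrableOn (fun y : ℝ => Complex.exp (-φ y + y * t * I)) (Set.Ioi N) :=
  H.integrableOn_exp_neg.mono' (H.continuousOn_cexp.aestronglyMeasurable measurableSet_Ioi)
    (ae_of_all _ fun y => (norm_cexp_neg_add_mul_I _ y t).le)

lemma aestronglyMeasurable_integration_by_parts_error (H : SlowPhase φ ψ N δ) :
    AEStronglyMeasurable
      (fun y : ℝ => Complex.exp (-φ y + y * t * I) / (ψ y - t * I) ^ 2 * deriv ψ y)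
      (volume.restrict (Set.Ioi N)) := by
  have cont : ContinuousOn
      (fun y : ℝ => Complex.exp (-φ y + y * t * I) / (ψ y - t * I) ^ 2) (Set.Ioi N) := by
    have hψ := H.continuousOn_deriv
    exact H.continuousOn_cexp.div (by fun_prop) fun y hy =>
      pow_ne_zero 2 (H.sub_mul_I_ne_zero (le_of_lt hy))
  exact (cont.aestronglyMeasurable measurableSet_Ioi).mul
    (Complex.measurable_ofReal.comp (measurable_deriv ψ)).aestronglyMeasurable

theorem norm_integral_cexp_sub_le (H : SlowPhase φ ψ N δ) :
    ‖(∫ y in Set.Ioi N, Complex.exp (-φ y + y * t * I)) -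
      Complex.exp (-φ N + N * t * I) / (ψ N - t * I)‖ ≤
      δ / (1 - δ) * leadingTerm φ ψ 1 t N := by
  have hasDeriv : ∀ y ∈ Set.Ici N,
      HasDerivAt (leadingTerm φ ψ 1 t) (deriv (leadingTerm φ ψ 1 t) y) y :=
    fun y hy => (H.hasDerivAt_leadingTerm hy).differentiableAt.hasDerivAt
  have nonpos : ∀ y ∈ Set.Ioi N, deriv (leadingTerm φ ψ 1 t) y ≤ 0 :=
    fun y hy => H.deriv_leadingTerm_nonpos le_rfl (le_of_lt hy)
  have integral_deriv :=
    integral_Ioi_of_hasDerivAt_of_nonpos' hasDeriv nonpos H.tendsto_leadingTerm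
  have bound_integrable := (integrableOn_Ioi_deriv_of_nonpos' hasDeriv nonpos
    H.tendsto_leadingTerm).const_mul (-(δ / (1 - δ)))
  have error_le := ae_restrict_of_forall_mem (μ := volume) measurableSet_Ioi
    fun y (hy : y ∈ Set.Ioi N) => H.norm_integration_by_parts_error_le (t := t) (le_of_lt hy)
  have error_integrable :=
    bound_integrable.mono' H.aestronglyMeasurable_integration_by_parts_error error_le
  have by_parts := integral_Ioi_of_hasDerivAt_of_tendsto'
    (fun y hy => H.hasDerivAt_cexp_div (t := t) hy)
    (H.integrableOn_cexp.add error_integrable) H.tendsto_cexp_div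
  rw [integral_add H.integrableOn_cexp error_integrable, zero_sub, neg_neg] at by_parts
  have integral_error_le := norm_integral_le_of_norm_le bound_integrable error_le
  rw [integral_const_mul, integral_deriv, zero_sub, neg_mul_neg] at integral_error_le
  rwa [← by_parts, sub_add_cancel_left, norm_neg]

theorem abs_integral_exp_mul_cos_sub_le (H : SlowPhase φ ψ N δ) (hx : N ≤ x) :
    |(∫ u in Set.Ioi (0 : ℝ), exp (-φ (x + u)) * cos (u * t)) - leadingTerm φ ψ 1 t x| ≤
      δ / (1 - δ) * leadingTerm φ ψ 1 t x := by
  have shifted := H.comp_const_add hx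
  have re_cexp : ∀ u : ℝ, (Complex.exp (-φ (x + u) + u * t * I)).re =
      exp (-φ (x + u)) * cos (u * t) := fun u => by simp [Complex.exp_re]
  have re_integral : (∫ u in Set.Ioi (0 : ℝ), Complex.exp (-φ (x + u) + u * t * I)).re =
      ∫ u in Set.Ioi (0 : ℝ), exp (-φ (x + u)) * cos (u * t) := by
    simp only [← re_cexp]
    exact (integral_re (𝕜 := ℂ) (shifted.integrableOn_cexp (t := t))).symm
  have re_leading : (Complex.exp (-φ x) / (ψ x - t * I)).re = leadingTerm φ ψ 1 t x := by
    rw [← Complex.ofReal_neg, ← Complex.ofReal_exp, div_eq_mul_inv, Complex.re_ofReal_mul,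
      Complex.inv_re, Complex.normSq_eq_norm_sq, norm_sub_mul_I_sq]
    simp [leadingTerm]
  have bound := shifted.norm_integral_cexp_sub_le (t := t)
  simp only [leadingTerm, add_zero, Complex.ofReal_zero, zero_mul] at bound
  rw [← re_integral, ← re_leading, ← Complex.sub_re]
  exact (Complex.abs_re_le_norm _).trans (re_leading ▸ bound)

end Oscillatory

lemma abs_two_mul_summand_sub_le (H : SlowPhase φ ψ N δ) (t : ℝ) (hx : N ≤ x) :
    |2 * (exp (-φ x) * ∫ u in Set.Ioi (0 : ℝ), exp (-φ (x + u)) * cos (u * t)) -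
      2 * leadingTerm φ ψ 2 t x| ≤ δ / (1 - δ) * (2 * leadingTerm φ ψ 2 t x) := by
  have factor : leadingTerm φ ψ 2 t x = exp (-φ x) * leadingTerm φ ψ 1 t x := by
    rw [leadingTerm, leadingTerm, ← mul_assoc, ← exp_add]
    ring_nf
  rw [factor, ← mul_sub, ← mul_sub, abs_mul, abs_mul, abs_two, abs_of_pos (exp_pos _)]
  calc _ ≤ 2 * (exp (-φ x) * (δ / (1 - δ) * leadingTerm φ ψ 1 t x)) := by
        gcongr
        exact H.abs_integral_exp_mul_cos_sub_le hx
    _ = _ := by ring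

theorem abs_two_mul_tsum_sub_tailMass_le (H : SlowPhase φ ψ N δ) (hδ : δ + ψ N ≤ 1 / 14) (t : ℝ) :
    |(2 * ∑' j : ℕ, exp (-φ (j + N)) *
        ∫ u in Set.Ioi (0 : ℝ), exp (-φ (j + N + u)) * cos (u * t)) - tailMass φ ψ t N| ≤
      3 * (δ + ψ N) * tailMass φ ψ t N := by
  have le_add : ∀ j : ℕ, N ≤ j + N := fun j => le_add_of_nonneg_left j.cast_nonneg
  have step : ∀ j : ℕ, _ := fun j => H.tailMass_sub_tailMass_mem_Icc (t := t) (le_add j)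
  have cast_succ : ∀ j : ℕ, ((j + 1 : ℕ) + N : ℝ) = j + N + 1 := fun j => by push_cast; ring
  obtain ⟨summable, mass_le, le_mass⟩ := summable_and_tsum_bounds_of_telescoping
    (G := fun j : ℕ => 2 * leadingTerm φ ψ 2 t (j + N)) (m := fun j : ℕ => tailMass φ ψ t (j + N))
    (sub_pos.2 H.lt_one)
    (fun j => mul_nonneg zero_le_two (H.leadingTerm_pos (le_add j)).le)
    (fun j => (H.tailMass_pos (le_add j)).le)
    (H.tendsto_tailMass.comp
      (tendsto_atTop_add_const_right _ N tendsto_natCast_atTop_atTop))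
    (fun j => by simpa only [cast_succ] using (step j).1)
    (fun j => by simpa only [cast_succ] using (step j).2)
  have first_term : leadingTerm φ ψ 2 t N = ψ N * tailMass φ ψ t N := by
    rw [leadingTerm, tailMass]; ring
  rw [Nat.cast_zero, zero_add] at mass_le le_mass
  rw [first_term, ← mul_assoc] at le_mass
  refine abs_sub_le_three_mul (H.tailMass_pos le_rfl) H.nonneg (H.pos le_rfl).le hδ
    mass_le le_mass ?_
  rw [← tsum_mul_left]
  exact abs_tsum_sub_tsum_le summable fun j => H.abs_two_mul_summand_sub_le t (le_add j)

end SlowPhase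

lemma exists_eq_mul_and_pos_of_abs_sub_le {T m c ε : ℝ} (hm : 0 < m) (hε : 0 < ε)
    (hcε : c * ε < 1) (h : |T - m| ≤ c * ε * m) :
    (∃ Θ : ℝ, |Θ| ≤ c ∧ T = m * (1 + Θ * ε)) ∧ 0 < T := by
  refine ⟨⟨(T - m) / (ε * m), ?_, ?_⟩, ?_⟩
  · rwa [abs_div, abs_of_pos (mul_pos hε hm), div_le_iff₀ (mul_pos hε hm), ← mul_assoc]
  · field_simp
    ring
  · nlinarith [(abs_le.1 h).1]

lemma hasDerivAt_const_mul_rpow_sub_one (α : ℝ) {r x : ℝ} (hx : 0 < x) :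
    HasDerivAt (fun y : ℝ => α * r * y ^ (r - 1)) (α * r * ((r - 1) * x ^ (r - 2))) x := by
  refine ((hasDerivAt_rpow_const (Or.inl hx.ne')).const_mul (α * r)).congr_deriv ?_
  ring_nf

lemma slowPhase_rpow {α r N δ : ℝ} (hα : 0 < α) (hr : 0 < r) (hN : 0 < N)
    (hδ : |1 - r| / (α * r) * N ^ (-r) ≤ δ) (hδ1 : δ < 1) :
    SlowPhase (fun x => α * x ^ r) (fun x => α * r * x ^ (r - 1)) N δ where
  hasDerivAt hx :=
    ((hasDerivAt_rpow_const (Or.inl (hN.trans_le hx).ne')).const_mul α).congr_deriv (by ring)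
  differentiableAt hx := (hasDerivAt_const_mul_rpow_sub_one α (hN.trans_le hx)).differentiableAt
  pos {x} hx := by
    have : 0 < x := hN.trans_le hx
    positivity
  abs_deriv_le {x} hx := by
    have x_pos : 0 < x := hN.trans_le hx
    have split : x ^ (r - 2) = x ^ (-r) * (x ^ (r - 1)) ^ 2 := by
      rw [← rpow_mul_natCast x_pos.le, ← rpow_add x_pos]
      congr 1
      push_cast
      ring
    rw [(hasDerivAt_const_mul_rpow_sub_one α x_pos).deriv]
    calc |α * r * ((r - 1) * x ^ (r - 2))|
        = |1 - r| / (α * r) * x ^ (-r) * (α * r * x ^ (r - 1)) ^ 2 := by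
          rw [abs_mul, abs_mul (r - 1), abs_of_pos (by positivity : 0 < α * r),
            abs_of_pos (by positivity : 0 < x ^ (r - 2)), abs_sub_comm, split]
          field_simp
      _ ≤ |1 - r| / (α * r) * N ^ (-r) * (α * r * x ^ (r - 1)) ^ 2 := by
          have := rpow_le_rpow_of_nonpos hN hx (neg_nonpos.2 hr.le)
          gcongr
      _ ≤ δ * (α * r * x ^ (r - 1)) ^ 2 := by gcongr
  lt_one := hδ1
  tendsto_atTop := (tendsto_rpow_atTop hr).const_mul_atTop hα

lemma n₂_pos_and_le {α r : ℝ} (p : ℝ≥0∞) (hr0 : 0 < r) (hr1 : r < 1) :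
    0 < n₂ α r p ∧
      1 / (α * r) * (n₂ α r p : ℝ) ^ (-r) +
        α * r * (if p = ∞ then 1 else p.toReal) * (n₂ α r p : ℝ) ^ (-(1 - r)) ≤ 1 / 14 := by
  have rpow_lim : ∀ s : ℝ, 0 < s → Tendsto (fun k : ℕ => (k : ℝ) ^ (-s)) atTop (nhds 0) :=
    fun s hs => (tendsto_rpow_neg_atTop hs).comp tendsto_natCast_atTop_atTop
  have lim := ((rpow_lim r hr0).const_mul (1 / (α * r))).add
    ((rpow_lim (1 - r) (sub_pos.2 hr1)).const_mul
      (α * r * (if p = ∞ then 1 else p.toReal)))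
  rw [mul_zero, mul_zero, add_zero] at lim
  exact Nat.sInf_mem ((eventually_gt_atTop 0).and
    (lim.eventually_le_const (by norm_num : (0 : ℝ) < 1 / 14))).exists

lemma pos_and_le_of_n₂_le {α r : ℝ} {p : ℝ≥0∞} {n : ℕ} (hα : 0 < α) (hr0 : 0 < r) (hr1 : r < 1)
    (hp : 1 ≤ p) (hn : n₂ α r p ≤ n) :
    0 < n ∧ (1 - r) / (α * r) * (n : ℝ) ^ (-r) + α * r * (n : ℝ) ^ (-(1 - r)) ≤ 1 / 14 := by
  obtain ⟨n₂_pos, n₂_le⟩ := n₂_pos_and_le (α := α) p hr0 hr1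
  have one_le_χ : 1 ≤ if p = ∞ then 1 else p.toReal := by
    split_ifs with hp_top
    · exact le_rfl
    · simpa using ENNReal.toReal_mono hp_top hp
  have rpow_anti : ∀ s : ℝ, 0 < s → (n : ℝ) ^ (-s) ≤ (n₂ α r p : ℝ) ^ (-s) := fun s hs =>
    rpow_le_rpow_of_nonpos (Nat.cast_pos.2 n₂_pos) (Nat.cast_le.2 hn) (neg_nonpos.2 hs.le)
  have rpow_r_le := rpow_anti r hr0
  have rpow_one_sub_le := rpow_anti (1 - r) (sub_pos.2 hr1)
  refine ⟨n₂_pos.trans_le hn, le_trans ?_ n₂_le⟩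
  gcongr ?_ / _ * ?_ + ?_ * ?_
  · linarith
  · exact le_mul_of_one_le_right (by positivity) one_le_χ

theorem statement12_general {α r : ℝ} (hα : 0 < α) (hr : 0 < r) {n : ℕ} (hn : 0 < n)
    (hsmall : |1 - r| / (α * r) * (n : ℝ) ^ (-r) + α * r * (n : ℝ) ^ (-(1 - r)) ≤ 1 / 14)
    (t : ℝ) :
    (∃ Θ : ℝ, |Θ| ≤ 3 ∧
      Qn α r n t =
        exp (-2 * α * (n : ℝ) ^ r) / (t ^ 2 + (α * r * (n : ℝ) ^ (r - 1)) ^ 2) *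
          (1 + Θ * (|1 - r| / (α * r) * (n : ℝ) ^ (-r) + α * r * (n : ℝ) ^ (-(1 - r))))) ∧
    0 < Qn α r n t := by
  have n_pos : (0 : ℝ) < n := Nat.cast_pos.2 hn
  have rpow_term_pos : 0 < α * r * (n : ℝ) ^ (-(1 - r)) := by positivity
  have H := slowPhase_rpow hα hr n_pos le_rfl (by linarith)
  have bound := H.abs_two_mul_tsum_sub_tailMass_le (by rwa [← neg_sub 1 r]) t
  have mass_eq : tailMass (fun x => α * x ^ r) (fun x => α * r * x ^ (r - 1)) t n =
      exp (-2 * α * (n : ℝ) ^ r) / (t ^ 2 + (α * r * (n : ℝ) ^ (r - 1)) ^ 2) := by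
    simp only [tailMass, neg_mul, mul_assoc]
  rw [← mass_eq]
  refine exists_eq_mul_and_pos_of_abs_sub_le (H.tailMass_pos le_rfl) (by positivity)
    (by linarith) ?_
  simpa only [Qn, Nat.cast_add, neg_mul, neg_sub] using bound

theorem statement12 (α r : ℝ) (p : ℝ≥0∞)
    (hα : 0 < α) (hr0 : 0 < r) (hr1 : r < 1) (hp : 1 ≤ p) :
    ∀ t ∈ Set.Icc (-π) π, ∀ n : ℕ, n₂ α r p ≤ n →
      (∃ Θ : ℝ, |Θ| < 5 ∧
        Qn α r n t =
          Real.exp (-2 * α * (n : ℝ) ^ r) / (t ^ 2 + (α * r * (n : ℝ) ^ (r - 1)) ^ 2) *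
            (1 + Θ * ((1 - r) / (α * r) * (n : ℝ) ^ (-r) + α * r * (n : ℝ) ^ (-(1 - r))))) ∧
      0 < Qn α r n t := by
  intro t _ n hn
  obtain ⟨n_pos, hsmall⟩ := pos_and_le_of_n₂_le hα hr0 hr1 hp hn
  have general := statement12_general hα hr0 n_pos
  rw [abs_of_pos (sub_pos.2 hr1)] at general
  obtain ⟨⟨Θ, hΘ, hQ⟩, Q_pos⟩ := general hsmall t
  exact ⟨⟨Θ, hΘ.trans_lt (by norm_num), hQ⟩, Q_pos⟩
end

section
/- Let α>0, 0<r<1, 1≤p≤∞. For t∈[−π,π] and integers n ≥ n₂(α,r,p), the function R_n(t) := 2 Σ_{k=1}^∞ Σ_{j=n}^∞ e^{-α j^r} ∫_0^∞ e^{-α(j+u)^r} ( cos((t−2πk)u) + cos((t+2πk)u) ) du satisfies 0 < R_n(t) ≤ (π/2 − 2/π)(αr n^{-(1-r)} + 1) e^{-2α n^r} < (π/3) e^{-2α n^r}. -/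
open MeasureTheory Real Filter
open scoped ENNReal

/-! Write `ψ(x) = e^{-αx^r}`, which is strictly convex and decreases to `0`. Two integrations by
parts give `∫₀^∞ ψ(a+u) cos(su) du = s⁻² ∫₀^∞ ψ''(a+u) (1 - cos(su)) du`, so each cosine integral
lies in `(0, -2ψ'(a)/s²]`. Since `-2ψψ' = -(ψ²)'`, summing over `j` costs at most
`-(ψ²)'(n) + ψ²(n)` by comparison with an integral, while the sum over `k` of the weights
`(t - 2πk)⁻² + (t + 2πk)⁻²` is largest at `t = ±π`, where `∑ 1/(2k+1)² = π²/8` evaluates it to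
`1/4 - 1/π²`. This yields `R_n(t) ≤ (1 - 4/π²)(αr n^{r-1} + 1/2) e^{-2αn^r}`, and
`π/2 - 2/π = (π/2)(1 - 4/π²)`. -/

section CosineIntegral

/-- `f` is strictly convex on `[0, ∞)` and decays at infinity: it is integrable, it and its
derivative `f'` vanish at infinity, and its second derivative `f''` is positive. The derivatives
are carried as explicit functions so that the integrals of `f` can be expressed through them. -/
structure StrictConvexDecay (f f' f'' : ℝ → ℝ) : Prop where
  hasDerivAt : ∀ u ∈ Set.Ici (0 : ℝ), HasDerivAt f (f' u) u
  hasDerivAt_deriv : ∀ u ∈ Set.Ici (0 : ℝ), HasDerivAt f' (f'' u) u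
  deriv2_pos : ∀ u ∈ Set.Ioi (0 : ℝ), 0 < f'' u
  tendsto_zero : Tendsto f atTop (nhds 0)
  tendsto_deriv_zero : Tendsto f' atTop (nhds 0)
  integrableOn : IntegrableOn f (Set.Ioi 0)

lemma integrable_mul_cos {g : ℝ → ℝ} {μ : Measure ℝ} (hg : Integrable g μ) (s : ℝ) :
    Integrable (fun u ↦ g u * cos (s * u)) μ :=
  hg.mul_bdd (c := 1) (by fun_prop) (.of_forall fun u ↦ abs_cos_le_one (s * u))

lemma integrable_mul_one_sub_cos {g : ℝ → ℝ} {μ : Measure ℝ} (hg : Integrable g μ) (s : ℝ) :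
    Integrable (fun u ↦ g u * (1 - cos (s * u))) μ := by
  simpa only [mul_one_sub] using! hg.sub (integrable_mul_cos hg s)

lemma tendsto_mul_zero_of_abs_le {ι : Type*} {l : Filter ι} {f g : ι → ℝ} {C : ℝ}
    (hf : Tendsto f l (nhds 0)) (hg : ∀ x, |g x| ≤ C) :
    Tendsto (fun x ↦ f x * g x) l (nhds 0) :=
  hf.zero_mul_isBoundedUnder_le (isBoundedUnder_of ⟨C, hg⟩)

namespace StrictConvexDecay

variable {f f' f'' : ℝ → ℝ} {s : ℝ}

lemma integrableOn_deriv2 (hf : StrictConvexDecay f f' f'') : IntegrableOn f'' (Set.Ioi 0) :=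
  integrableOn_Ioi_deriv_of_nonneg' hf.hasDerivAt_deriv (fun u hu ↦ (hf.deriv2_pos u hu).le)
    hf.tendsto_deriv_zero

lemma integral_deriv2 (hf : StrictConvexDecay f f' f'') :
    ∫ u in Set.Ioi (0 : ℝ), f'' u = -f' 0 := by
  rw [integral_Ioi_of_hasDerivAt_of_tendsto' hf.hasDerivAt_deriv hf.integrableOn_deriv2
    hf.tendsto_deriv_zero, zero_sub]

lemma integral_mul_cos (hf : StrictConvexDecay f f' f'') (hs : s ≠ 0) :
    ∫ u in Set.Ioi (0 : ℝ), f u * cos (s * u) =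
      (∫ u in Set.Ioi (0 : ℝ), f'' u * (1 - cos (s * u))) / s ^ 2 := by
  set F : ℝ → ℝ := fun u ↦ f u * (sin (s * u) / s) + f' u * ((cos (s * u) - 1) / s ^ 2)
  have F_deriv : ∀ u ∈ Set.Ici (0 : ℝ),
      HasDerivAt F (f u * cos (s * u) - f'' u * (1 - cos (s * u)) / s ^ 2) u := by
    intro u hu
    have hsu : HasDerivAt (fun u : ℝ ↦ s * u) s u := by
      simpa using (hasDerivAt_id u).const_mul s
    refine (((hf.hasDerivAt u hu).mul (hsu.sin.div_const s)).add
      ((hf.hasDerivAt_deriv u hu).mul ((hsu.cos.sub_const 1).div_const (s ^ 2)))).congr_deriv ?_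
    field_simp
    ring
  have F_lim : Tendsto F atTop (nhds 0) := by
    have sin_bound (u : ℝ) : |sin (s * u) / s| ≤ 1 / |s| := by
      rw [abs_div]
      gcongr
      exact abs_sin_le_one _
    have cos_bound (u : ℝ) : |(cos (s * u) - 1) / s ^ 2| ≤ 2 / |s ^ 2| := by
      rw [abs_div]
      gcongr
      exact abs_le.2 ⟨by linarith [neg_one_le_cos (s * u)], by linarith [cos_le_one (s * u)]⟩
    simpa using! (tendsto_mul_zero_of_abs_le hf.tendsto_zero sin_bound).add
      (tendsto_mul_zero_of_abs_le hf.tendsto_deriv_zero cos_bound)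
  have f_int := integrable_mul_cos hf.integrableOn s
  have f''_int := (integrable_mul_one_sub_cos hf.integrableOn_deriv2 s).div_const (s ^ 2)
  have F_zero : F 0 = 0 := by simp [F]
  have parts := integral_Ioi_of_hasDerivAt_of_tendsto' F_deriv (f_int.sub f''_int) F_lim
  rw [integral_sub f_int f''_int, integral_div, F_zero, sub_zero] at parts
  exact sub_eq_zero.1 parts

lemma deriv2_mul_one_sub_cos_nonneg (hf : StrictConvexDecay f f' f'') (s : ℝ) :
    ∀ u ∈ Set.Ioi (0 : ℝ), 0 ≤ f'' u * (1 - cos (s * u)) :=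
  fun u hu ↦ mul_nonneg (hf.deriv2_pos u hu).le (sub_nonneg.2 (cos_le_one _))

lemma integral_mul_cos_pos (hf : StrictConvexDecay f f' f'') (hs : s ≠ 0) :
    0 < ∫ u in Set.Ioi (0 : ℝ), f u * cos (s * u) := by
  rw [hf.integral_mul_cos hs]
  refine div_pos ?_ (by positivity)
  rw [setIntegral_pos_iff_support_of_nonneg_ae
    (ae_restrict_of_forall_mem measurableSet_Ioi (hf.deriv2_mul_one_sub_cos_nonneg s))
    (integrable_mul_one_sub_cos hf.integrableOn_deriv2 s)]
  have near_zero_subset : Set.Ioo 0 (π / |s|) ⊆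
      (Function.support fun u ↦ f'' u * (1 - cos (s * u))) ∩ Set.Ioi 0 := by
    rintro u ⟨u_pos, u_lt⟩
    rw [lt_div_iff₀' (abs_pos.2 hs)] at u_lt
    have cos_lt : cos (s * u) < 1 := by
      rw [← cos_abs, abs_mul, abs_of_pos u_pos, ← cos_zero]
      exact cos_lt_cos_of_nonneg_of_le_pi le_rfl u_lt.le (by positivity)
    exact ⟨(mul_pos (hf.deriv2_pos u u_pos) (sub_pos.2 cos_lt)).ne', u_pos⟩
  refine lt_of_lt_of_le ?_ (measure_mono near_zero_subset)
  rw [volume_Ioo, ENNReal.ofReal_pos, sub_zero]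
  positivity

lemma integral_mul_cos_le (hf : StrictConvexDecay f f' f'') (hs : s ≠ 0) :
    ∫ u in Set.Ioi (0 : ℝ), f u * cos (s * u) ≤ -2 * f' 0 / s ^ 2 := by
  rw [hf.integral_mul_cos hs]
  gcongr
  calc ∫ u in Set.Ioi (0 : ℝ), f'' u * (1 - cos (s * u))
      ≤ ∫ u in Set.Ioi (0 : ℝ), f'' u * 2 := by
        refine setIntegral_mono_on (integrable_mul_one_sub_cos hf.integrableOn_deriv2 s)
          (hf.integrableOn_deriv2.mul_const 2) measurableSet_Ioi fun u hu ↦ ?_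
        have := hf.deriv2_pos u hu
        gcongr
        linarith [neg_one_le_cos (s * u)]
    _ = -2 * f' 0 := by
        rw [integral_mul_const, hf.integral_deriv2]
        ring

end StrictConvexDecay

end CosineIntegral

section Series

lemma sum_range_add_le_of_antitoneOn {F g : ℝ → ℝ} {a : ℝ}
    (hF : ∀ x ∈ Set.Ici a, HasDerivAt F (-g x) x) (hF_nonneg : ∀ x ∈ Set.Ici a, 0 ≤ F x)
    (hg : AntitoneOn g (Set.Ici a)) (hg_nonneg : ∀ x ∈ Set.Ici a, 0 ≤ g x) (N : ℕ) :
    ∑ j ∈ Finset.range N, g (a + j) ≤ g a + F a := by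
  have a_le : a ≤ a + N := by simp
  have antitone : AntitoneOn g (Set.Icc a (a + N)) := hg.mono Set.Icc_subset_Ici_self
  have integral_eq : ∫ x in a..a + N, g x = F a - F (a + N) := by
    rw [← Set.uIcc_of_le a_le] at antitone
    rw [intervalIntegral.integral_eq_sub_of_hasDerivAt (f := fun x ↦ -F x) (fun x hx ↦ ?_)
      antitone.intervalIntegrable]
    · ring
    · rw [Set.uIcc_of_le a_le] at hx
      simpa using! (hF x hx.1).neg
  calc ∑ j ∈ Finset.range N, g (a + j)
      ≤ ∑ j ∈ Finset.range (N + 1), g (a + j) := by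
        rw [Finset.sum_range_succ]
        exact le_add_of_nonneg_right (hg_nonneg _ a_le)
    _ = g a + ∑ j ∈ Finset.range N, g (a + (j + 1 : ℕ)) := by
        rw [Finset.sum_range_succ', Nat.cast_zero, add_zero, add_comm]
    _ ≤ g a + ∫ x in a..a + N, g x := by
        gcongr
        exact antitone.sum_le_integral
    _ ≤ g a + F a := by
        rw [integral_eq]
        linarith [hF_nonneg (a + N) a_le]

lemma tsum_tsum_pos_and_le {ι κ : Type*} [Nonempty ι] [Nonempty κ] {T : ι → κ → ℝ}
    {w : ι → ℝ} {h : κ → ℝ} (hw : Summable w) (hh : Summable h)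
    (T_pos : ∀ k j, 0 < T k j) (T_le : ∀ k j, T k j ≤ w k * h j) :
    0 < ∑' k, ∑' j, T k j ∧ ∑' k, ∑' j, T k j ≤ (∑' k, w k) * ∑' j, h j := by
  obtain ⟨k₀⟩ := ‹Nonempty ι›
  obtain ⟨j₀⟩ := ‹Nonempty κ›
  have row_summable (k : ι) : Summable (T k) :=
    .of_nonneg_of_le (fun j ↦ (T_pos k j).le) (T_le k) (hh.mul_left _)
  have row_pos (k : ι) : 0 < ∑' j, T k j :=
    (row_summable k).tsum_pos (fun j ↦ (T_pos k j).le) j₀ (T_pos k j₀)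
  have row_le (k : ι) : ∑' j, T k j ≤ w k * ∑' j, h j := by
    rw [← tsum_mul_left]
    exact (row_summable k).tsum_le_tsum (T_le k) (hh.mul_left _)
  have summable : Summable fun k ↦ ∑' j, T k j :=
    .of_nonneg_of_le (fun k ↦ (row_pos k).le) row_le (hw.mul_right _)
  refine ⟨summable.tsum_pos (fun k ↦ (row_pos k).le) k₀ (row_pos k₀), ?_⟩
  rw [← tsum_mul_right]
  exact summable.tsum_le_tsum row_le (hw.mul_right _)

lemma hasSum_one_div_odd_sq : HasSum (fun k : ℕ ↦ 1 / (2 * (k : ℝ) + 1) ^ 2) (π ^ 2 / 8) := by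
  have even : HasSum (fun k : ℕ ↦ 1 / ((2 * k : ℕ) : ℝ) ^ 2) (π ^ 2 / 24) := by
    convert! hasSum_zeta_two.mul_left (1 / 4) using 1
    · ext k
      push_cast
      ring
    · ring
  have odd : Summable fun k : ℕ ↦ 1 / ((2 * k + 1 : ℕ) : ℝ) ^ 2 :=
    hasSum_zeta_two.summable.comp_injective (i := fun k ↦ 2 * k + 1) fun _ _ h ↦ by simpa using h
  have even_add_odd := (HasSum.even_add_odd (f := fun n : ℕ ↦ 1 / (n : ℝ) ^ 2)
    even odd.hasSum).unique hasSum_zeta_two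
  have odd_tsum : ∑' k : ℕ, 1 / ((2 * k + 1 : ℕ) : ℝ) ^ 2 = π ^ 2 / 8 := by linarith
  exact_mod_cast odd_tsum ▸ odd.hasSum

end Series

section FrequencyWeight

/-- The weight `(t - 2πm)⁻² + (t + 2πm)⁻²` with `m = k + 1`, the sum of the inverse squares of the
two frequencies in the `k`-th summand of `Rn`. -/
noncomputable def frequencyWeight (t : ℝ) (k : ℕ) : ℝ :=
  1 / (t - 2 * π * ((k : ℝ) + 1)) ^ 2 + 1 / (t + 2 * π * ((k : ℝ) + 1)) ^ 2

lemma one_div_sub_sq_add_one_div_add_sq {x c : ℝ} (hx : |x| < c) :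
    1 / (x - c) ^ 2 + 1 / (x + c) ^ 2 = 2 * (c ^ 2 + x ^ 2) / (c ^ 2 - x ^ 2) ^ 2 := by
  obtain ⟨neg_lt, lt⟩ := abs_lt.1 hx
  have sub_ne : x - c ≠ 0 := by linarith
  have add_ne : x + c ≠ 0 := by linarith
  have factor : c ^ 2 - x ^ 2 = -((x - c) * (x + c)) := by ring
  rw [factor]
  field_simp
  ring

lemma one_div_sub_sq_add_one_div_add_sq_le {x y c : ℝ} (hxy : |x| ≤ |y|) (hyc : |y| < c) :
    1 / (x - c) ^ 2 + 1 / (x + c) ^ 2 ≤ 1 / (y - c) ^ 2 + 1 / (y + c) ^ 2 := by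
  rw [one_div_sub_sq_add_one_div_add_sq (hxy.trans_lt hyc), one_div_sub_sq_add_one_div_add_sq hyc]
  have sq_le : x ^ 2 ≤ y ^ 2 := sq_le_sq.2 hxy
  have sq_lt : 0 < c ^ 2 - y ^ 2 := sub_pos.2 (sq_lt_sq.2 (hyc.trans_le (le_abs_self c)))
  gcongr

lemma pi_lt_two_pi_mul (k : ℕ) : π < 2 * π * ((k : ℝ) + 1) := by
  have : 0 ≤ π * k := by positivity
  linarith [pi_pos]

lemma frequencyWeight_le_pi {t : ℝ} (ht : |t| ≤ π) (k : ℕ) :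
    frequencyWeight t k ≤ frequencyWeight π k := by
  have abs_pi : |π| = π := abs_of_pos pi_pos
  exact one_div_sub_sq_add_one_div_add_sq_le (abs_pi.symm ▸ ht) (abs_pi.symm ▸ pi_lt_two_pi_mul k)

lemma hasSum_frequencyWeight_pi : HasSum (frequencyWeight π) (1 / 4 - 1 / π ^ 2) := by
  have shifted := (hasSum_nat_add_iff' 1).2 hasSum_one_div_odd_sq
  convert! (hasSum_one_div_odd_sq.add shifted).mul_left (1 / π ^ 2) using 1
  · ext k
    have sub_eq : π - 2 * π * ((k : ℝ) + 1) = -(π * (2 * k + 1)) := by ring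
    have add_eq : π + 2 * π * ((k : ℝ) + 1) = π * (2 * (k + 1 : ℕ) + 1) := by push_cast; ring
    rw [frequencyWeight, sub_eq, add_eq]
    field_simp
  · rw [Finset.sum_range_one, Nat.cast_zero, mul_zero, zero_add, one_pow, div_one]
    field_simp
    ring

end FrequencyWeight

section StretchedExp

/-- The stretched exponential `ψ(x) = e^{-αx^r}`. -/
noncomputable def stretchedExp (α r x : ℝ) : ℝ := exp (-α * x ^ r)

/-- `-ψ'(x) = αr x^{r-1} e^{-αx^r}`, signed so as to be positive. -/
noncomputable def stretchedExpSlope (α r x : ℝ) : ℝ := α * r * x ^ (r - 1) * stretchedExp α r x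

variable {α r a x : ℝ}

lemma stretchedExp_pos : 0 < stretchedExp α r x := exp_pos _

lemma stretchedExp_two_mul : stretchedExp (2 * α) r x = stretchedExp α r x ^ 2 := by
  rw [stretchedExp, stretchedExp, ← exp_nat_mul]
  ring_nf

lemma stretchedExpSlope_two_mul :
    stretchedExpSlope (2 * α) r x = 2 * stretchedExp α r x * stretchedExpSlope α r x := by
  rw [stretchedExpSlope, stretchedExpSlope, stretchedExp_two_mul]
  ring

lemma stretchedExpSlope_pos (hα : 0 < α) (hr : 0 < r) (hx : 0 < x) :
    0 < stretchedExpSlope α r x :=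
  mul_pos (by positivity) stretchedExp_pos

lemma hasDerivAt_stretchedExp (hx : 0 < x) :
    HasDerivAt (stretchedExp α r) (-stretchedExpSlope α r x) x := by
  refine ((hasDerivAt_rpow_const (p := r) (.inl hx.ne')).const_mul (-α)).exp.congr_deriv ?_
  rw [stretchedExpSlope, stretchedExp]
  ring

lemma hasDerivAt_neg_stretchedExpSlope (hx : 0 < x) :
    HasDerivAt (fun x ↦ -stretchedExpSlope α r x)
      ((α * r * (1 - r) * x ^ (r - 1 - 1) + (α * r * x ^ (r - 1)) ^ 2) * stretchedExp α r x) x := by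
  refine ((((hasDerivAt_rpow_const (p := r - 1) (.inl hx.ne')).const_mul (α * r)).mul
    (hasDerivAt_stretchedExp hx)).neg).congr_deriv ?_
  rw [stretchedExpSlope]
  ring

lemma antitoneOn_stretchedExp (hα : 0 ≤ α) (hr : 0 ≤ r) :
    AntitoneOn (stretchedExp α r) (Set.Ici 0) := fun x hx y _ hxy ↦ by
  have rpow_le : x ^ r ≤ y ^ r := rpow_le_rpow hx hxy hr
  exact exp_le_exp.2 (mul_le_mul_of_nonpos_left rpow_le (neg_nonpos.2 hα))

lemma antitoneOn_stretchedExpSlope (hα : 0 ≤ α) (hr₀ : 0 ≤ r) (hr₁ : r ≤ 1) :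
    AntitoneOn (stretchedExpSlope α r) (Set.Ioi 0) := fun x hx y hy hxy ↦ by
  have rpow_le : y ^ (r - 1) ≤ x ^ (r - 1) :=
    rpow_le_rpow_of_nonpos hx hxy (sub_nonpos.2 hr₁)
  exact mul_le_mul (by gcongr) (antitoneOn_stretchedExp hα hr₀ (Set.Ioi_subset_Ici_self hx)
      (Set.Ioi_subset_Ici_self hy) hxy)
    stretchedExp_pos.le (mul_nonneg (by positivity) (rpow_nonneg (le_of_lt hx) _))

lemma tendsto_stretchedExp (hα : 0 < α) (hr : 0 < r) :
    Tendsto (stretchedExp α r) atTop (nhds 0) :=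
  tendsto_exp_atBot.comp ((tendsto_rpow_atTop hr).const_mul_atTop_of_neg (neg_lt_zero.2 hα))

lemma tendsto_stretchedExpSlope (hα : 0 < α) (hr₀ : 0 < r) (hr₁ : r ≤ 1) :
    Tendsto (stretchedExpSlope α r) atTop (nhds 0) := by
  have majorant : Tendsto (fun x ↦ α * r * stretchedExp α r x) atTop (nhds 0) := by
    simpa using (tendsto_stretchedExp hα hr₀).const_mul (α * r)
  refine squeeze_zero' ?_ ?_ majorant <;> filter_upwards [eventually_ge_atTop 1] with x hx
  · exact (stretchedExpSlope_pos hα hr₀ (by linarith)).le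
  · exact mul_le_mul_of_nonneg_right (mul_le_of_le_one_right (by positivity)
      (rpow_le_one_of_one_le_of_nonpos hx (sub_nonpos.2 hr₁))) stretchedExp_pos.le

lemma integrableOn_stretchedExp (hα : 0 < α) (hr : 0 < r) :
    IntegrableOn (stretchedExp α r) (Set.Ioi 0) := by
  simpa only [rpow_zero, one_mul] using!
    integrableOn_rpow_mul_exp_neg_mul_rpow (s := 0) (by norm_num) hr hα

lemma integrableOn_stretchedExp_add (hα : 0 < α) (hr : 0 < r) (ha : 0 ≤ a) :
    IntegrableOn (fun u ↦ stretchedExp α r (a + u)) (Set.Ioi 0) := by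
  have tail := (integrableOn_stretchedExp hα hr).mono_set (Set.Ioi_subset_Ioi ha)
  simpa using! ((measurePreserving_add_left volume a).integrableOn_comp_preimage
    (measurableEmbedding_addLeft a)).2 tail

lemma strictConvexDecay_stretchedExp_add (hα : 0 < α) (hr₀ : 0 < r) (hr₁ : r ≤ 1) (ha : 0 < a) :
    StrictConvexDecay (fun u ↦ stretchedExp α r (a + u)) (fun u ↦ -stretchedExpSlope α r (a + u))
      (fun u ↦ (α * r * (1 - r) * (a + u) ^ (r - 1 - 1) + (α * r * (a + u) ^ (r - 1)) ^ 2) *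
        stretchedExp α r (a + u)) where
  hasDerivAt u hu := (hasDerivAt_stretchedExp (add_pos_of_pos_of_nonneg ha hu)).comp_const_add a u
  hasDerivAt_deriv u hu :=
    (hasDerivAt_neg_stretchedExpSlope (add_pos_of_pos_of_nonneg ha hu)).comp_const_add a u
  deriv2_pos u hu := by
    have hau : 0 < a + u := add_pos ha hu
    have : 0 ≤ 1 - r := sub_nonneg.2 hr₁
    exact mul_pos (by positivity) stretchedExp_pos
  tendsto_zero := (tendsto_stretchedExp hα hr₀).comp (tendsto_atTop_add_const_left _ a tendsto_id)
  tendsto_deriv_zero := by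
    simpa using! ((tendsto_stretchedExpSlope hα hr₀ hr₁).comp
      (tendsto_atTop_add_const_left _ a tendsto_id)).neg
  integrableOn := integrableOn_stretchedExp_add hα hr₀ ha.le

lemma sum_stretchedExpSlope_le (hα : 0 < α) (hr₀ : 0 < r) (hr₁ : r ≤ 1) (ha : 0 < a) (N : ℕ) :
    ∑ j ∈ Finset.range N, stretchedExpSlope α r (a + j) ≤
      stretchedExpSlope α r a + stretchedExp α r a :=
  sum_range_add_le_of_antitoneOn (fun _ hx ↦ hasDerivAt_stretchedExp (ha.trans_le hx))
    (fun _ _ ↦ stretchedExp_pos.le)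
    ((antitoneOn_stretchedExpSlope hα.le hr₀.le hr₁).mono fun _ hx ↦ ha.trans_le hx)
    (fun _ hx ↦ (stretchedExpSlope_pos hα hr₀ (ha.trans_le hx)).le) N

lemma summable_stretchedExpSlope (hα : 0 < α) (hr₀ : 0 < r) (hr₁ : r ≤ 1) (ha : 0 < a) :
    Summable fun j : ℕ ↦ stretchedExpSlope α r (a + j) :=
  summable_of_sum_range_le (fun _ ↦ (stretchedExpSlope_pos hα hr₀ (by positivity)).le)
    (sum_stretchedExpSlope_le hα hr₀ hr₁ ha)

lemma tsum_stretchedExpSlope_le (hα : 0 < α) (hr₀ : 0 < r) (hr₁ : r ≤ 1) (ha : 0 < a) :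
    ∑' j : ℕ, stretchedExpSlope α r (a + j) ≤ stretchedExpSlope α r a + stretchedExp α r a :=
  Real.tsum_le_of_sum_range_le (fun _ ↦ (stretchedExpSlope_pos hα hr₀ (by positivity)).le)
    (sum_stretchedExpSlope_le hα hr₀ hr₁ ha)

lemma integral_stretchedExp_mul_cos_add_cos_pos (hα : 0 < α) (hr₀ : 0 < r) (hr₁ : r ≤ 1)
    (ha : 0 < a) {s₁ s₂ : ℝ} (hs₁ : s₁ ≠ 0) (hs₂ : s₂ ≠ 0) :
    0 < ∫ u in Set.Ioi (0 : ℝ), stretchedExp α r (a + u) * (cos (s₁ * u) + cos (s₂ * u)) := by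
  have decay := strictConvexDecay_stretchedExp_add hα hr₀ hr₁ ha
  simp_rw [mul_add (stretchedExp α r _)]
  rw [integral_add (integrable_mul_cos decay.integrableOn s₁)
    (integrable_mul_cos decay.integrableOn s₂)]
  exact add_pos (decay.integral_mul_cos_pos hs₁) (decay.integral_mul_cos_pos hs₂)

lemma integral_stretchedExp_mul_cos_add_cos_le (hα : 0 < α) (hr₀ : 0 < r) (hr₁ : r ≤ 1)
    (ha : 0 < a) {s₁ s₂ : ℝ} (hs₁ : s₁ ≠ 0) (hs₂ : s₂ ≠ 0) :
    ∫ u in Set.Ioi (0 : ℝ), stretchedExp α r (a + u) * (cos (s₁ * u) + cos (s₂ * u)) ≤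
      2 * stretchedExpSlope α r a * (1 / s₁ ^ 2 + 1 / s₂ ^ 2) := by
  have decay := strictConvexDecay_stretchedExp_add hα hr₀ hr₁ ha
  simp_rw [mul_add (stretchedExp α r _)]
  rw [integral_add (integrable_mul_cos decay.integrableOn s₁)
    (integrable_mul_cos decay.integrableOn s₂)]
  refine (add_le_add (decay.integral_mul_cos_le hs₁) (decay.integral_mul_cos_le hs₂)).trans_eq ?_
  rw [add_zero]
  ring

end StretchedExp

section Threshold

variable {r : ℝ}

lemma n₂_spec (α : ℝ) (hr₀ : 0 < r) (hr₁ : r < 1) (p : ℝ≥0∞) :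
    0 < n₂ α r p ∧ 1 / (α * r) * (n₂ α r p : ℝ) ^ (-r) +
      α * r * (if p = ∞ then 1 else p.toReal) * (n₂ α r p : ℝ) ^ (-(1 - r)) ≤ 1 / 14 := by
  have rpow_lim {s : ℝ} (hs : 0 < s) (c : ℝ) :
      Tendsto (fun n : ℕ ↦ c * (n : ℝ) ^ (-s)) atTop (nhds 0) := by
    simpa using! ((tendsto_rpow_neg_atTop hs).comp tendsto_natCast_atTop_atTop).const_mul c
  have sum_lim := (rpow_lim hr₀ (1 / (α * r))).add
    (rpow_lim (sub_pos.2 hr₁) (α * r * (if p = ∞ then 1 else p.toReal)))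
  rw [add_zero] at sum_lim
  exact Nat.sInf_mem ((eventually_gt_atTop 0).and
    (sum_lim.eventually_le_const (by norm_num : (0 : ℝ) < 1 / 14))).exists

lemma mul_rpow_le_of_n₂_le {α : ℝ} {p : ℝ≥0∞} {n : ℕ} (hα : 0 < α) (hr₀ : 0 < r) (hr₁ : r < 1)
    (hp : 1 ≤ p) (hn : n₂ α r p ≤ n) : α * r * (n : ℝ) ^ (-(1 - r)) ≤ 1 / 14 := by
  obtain ⟨n₂_pos, n₂_le⟩ := n₂_spec α hr₀ hr₁ p
  set χ : ℝ := if p = ∞ then 1 else p.toReal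
  have one_le_χ : 1 ≤ χ := by
    unfold χ
    split_ifs with hp_top
    · rfl
    · simpa using ENNReal.toReal_mono hp_top hp
  calc α * r * (n : ℝ) ^ (-(1 - r))
      ≤ α * r * (n₂ α r p : ℝ) ^ (-(1 - r)) := by
        gcongr α * r * ?_
        exact rpow_le_rpow_of_nonpos (by positivity) (by exact_mod_cast hn) (by linarith)
    _ ≤ α * r * χ * (n₂ α r p : ℝ) ^ (-(1 - r)) := by
        gcongr ?_ * _
        exact le_mul_of_one_le_right (by positivity) one_le_χ
    _ ≤ 1 / 14 := (le_add_of_nonneg_left (by positivity)).trans n₂_le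

end Threshold

section Remainder

/-- The `(k, j)` summand of `Rn α r n t`, with the summation indices shifted to start at `0`. -/
noncomputable def RnTerm (α r : ℝ) (n : ℕ) (t : ℝ) (k j : ℕ) : ℝ :=
  stretchedExp α r ((j + n : ℕ) : ℝ) *
    ∫ u in Set.Ioi (0 : ℝ), stretchedExp α r (((j + n : ℕ) : ℝ) + u) *
      (cos ((t - 2 * π * ((k : ℝ) + 1)) * u) + cos ((t + 2 * π * ((k : ℝ) + 1)) * u))

variable {α r t : ℝ} {n : ℕ}

lemma Rn_eq_tsum_RnTerm : Rn α r n t = 2 * ∑' k, ∑' j, RnTerm α r n t k j := rfl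

lemma sub_two_pi_mul_ne_zero (ht : |t| ≤ π) (k : ℕ) : t - 2 * π * ((k : ℝ) + 1) ≠ 0 := by
  linarith [pi_lt_two_pi_mul k, le_abs_self t]

lemma add_two_pi_mul_ne_zero (ht : |t| ≤ π) (k : ℕ) : t + 2 * π * ((k : ℝ) + 1) ≠ 0 := by
  linarith [pi_lt_two_pi_mul k, neg_abs_le t]

lemma RnTerm_pos (hα : 0 < α) (hr₀ : 0 < r) (hr₁ : r ≤ 1) (ht : |t| ≤ π) (hn : 0 < n) (k j : ℕ) :
    0 < RnTerm α r n t k j :=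
  mul_pos stretchedExp_pos (integral_stretchedExp_mul_cos_add_cos_pos hα hr₀ hr₁ (by positivity)
    (sub_two_pi_mul_ne_zero ht k) (add_two_pi_mul_ne_zero ht k))

lemma RnTerm_le (hα : 0 < α) (hr₀ : 0 < r) (hr₁ : r ≤ 1) (ht : |t| ≤ π) (hn : 0 < n) (k j : ℕ) :
    RnTerm α r n t k j ≤ frequencyWeight π k * stretchedExpSlope (2 * α) r (n + j) := by
  rw [← Nat.cast_add, add_comm n j]
  have node_pos : (0 : ℝ) < (j + n : ℕ) := by positivity
  calc RnTerm α r n t k j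
      ≤ stretchedExp α r (j + n : ℕ) *
          (2 * stretchedExpSlope α r (j + n : ℕ) * frequencyWeight t k) :=
        mul_le_mul_of_nonneg_left (integral_stretchedExp_mul_cos_add_cos_le hα hr₀ hr₁ node_pos
          (sub_two_pi_mul_ne_zero ht k) (add_two_pi_mul_ne_zero ht k)) stretchedExp_pos.le
    _ = frequencyWeight t k * stretchedExpSlope (2 * α) r (j + n : ℕ) := by
        rw [stretchedExpSlope_two_mul]
        ring
    _ ≤ frequencyWeight π k * stretchedExpSlope (2 * α) r (j + n : ℕ) :=
        mul_le_mul_of_nonneg_right (frequencyWeight_le_pi ht k)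
          (stretchedExpSlope_pos (by positivity) hr₀ node_pos).le

lemma Rn_pos_and_le (hα : 0 < α) (hr₀ : 0 < r) (hr₁ : r ≤ 1) (ht : |t| ≤ π) (hn : 0 < n) :
    0 < Rn α r n t ∧ Rn α r n t ≤
      (1 - 4 / π ^ 2) * (α * r * (n : ℝ) ^ (r - 1) + 1 / 2) * stretchedExp (2 * α) r n := by
  have n_pos : (0 : ℝ) < n := by positivity
  have two_α_pos : 0 < 2 * α := by positivity
  obtain ⟨tsum_pos, tsum_le⟩ := tsum_tsum_pos_and_le hasSum_frequencyWeight_pi.summable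
    (summable_stretchedExpSlope two_α_pos hr₀ hr₁ n_pos) (RnTerm_pos hα hr₀ hr₁ ht hn)
    (RnTerm_le hα hr₀ hr₁ ht hn)
  rw [Rn_eq_tsum_RnTerm]
  refine ⟨mul_pos two_pos tsum_pos, ?_⟩
  rw [hasSum_frequencyWeight_pi.tsum_eq] at tsum_le
  have weight_nonneg : 0 ≤ 1 / 4 - 1 / π ^ 2 :=
    hasSum_frequencyWeight_pi.nonneg fun k ↦ by unfold frequencyWeight; positivity
  calc 2 * ∑' k, ∑' j, RnTerm α r n t k j
      ≤ 2 * ((1 / 4 - 1 / π ^ 2) *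
          (stretchedExpSlope (2 * α) r n + stretchedExp (2 * α) r n)) := by
        gcongr
        exact tsum_le.trans (mul_le_mul_of_nonneg_left
          (tsum_stretchedExpSlope_le two_α_pos hr₀ hr₁ n_pos) weight_nonneg)
    _ = _ := by
        rw [stretchedExpSlope]
        ring

lemma pi_div_two_sub_two_div_pi : π / 2 - 2 / π = π / 2 * (1 - 4 / π ^ 2) := by
  field_simp
  ring

lemma one_sub_four_div_pi_sq_pos : 0 < 1 - 4 / π ^ 2 := by
  rw [sub_pos, div_lt_one (by positivity)]
  nlinarith [pi_gt_three]

lemma one_sub_four_div_pi_sq_mul_add_half_le {A : ℝ} (hA : 0 ≤ A) :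
    (1 - 4 / π ^ 2) * (A + 1 / 2) ≤ (π / 2 - 2 / π) * (A + 1) := by
  have one_sub_pos := one_sub_four_div_pi_sq_pos
  calc (1 - 4 / π ^ 2) * (A + 1 / 2)
      ≤ (1 - 4 / π ^ 2) * (π / 2 * (A + 1)) := by
        gcongr
        nlinarith [pi_gt_three]
    _ = (π / 2 - 2 / π) * (A + 1) := by
        rw [pi_div_two_sub_two_div_pi]
        ring

lemma pi_div_two_sub_two_div_pi_mul_lt {A : ℝ} (hA : A ≤ 1 / 14) :
    (π / 2 - 2 / π) * (A + 1) < π / 3 := by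
  have pi_sq_lt : π ^ 2 < 180 / 17 := by nlinarith [pi_lt_d2, pi_gt_three]
  have one_sub_lt : 1 - 4 / π ^ 2 < 28 / 45 := by
    rw [sub_lt_comm, lt_div_iff₀ (by positivity)]
    linarith
  calc (π / 2 - 2 / π) * (A + 1)
      ≤ π / 2 * (1 - 4 / π ^ 2) * (1 / 14 + 1) := by
        rw [pi_div_two_sub_two_div_pi]
        have one_sub_pos := one_sub_four_div_pi_sq_pos
        gcongr
    _ < π / 2 * (28 / 45) * (1 / 14 + 1) := by gcongr
    _ = π / 3 := by ring

theorem statement13_general (hα : 0 < α) (hr₀ : 0 < r) (hr₁ : r ≤ 1) (ht : |t| ≤ π) (hn : 0 < n) :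
    0 < Rn α r n t ∧
    Rn α r n t ≤ (π / 2 - 2 / π) * (α * r * (n : ℝ) ^ (-(1 - r)) + 1) *
      exp (-2 * α * (n : ℝ) ^ r) ∧
    (α * r * (n : ℝ) ^ (-(1 - r)) ≤ 1 / 14 →
      (π / 2 - 2 / π) * (α * r * (n : ℝ) ^ (-(1 - r)) + 1) * exp (-2 * α * (n : ℝ) ^ r) <
        π / 3 * exp (-2 * α * (n : ℝ) ^ r)) := by
  obtain ⟨pos, le⟩ := Rn_pos_and_le hα hr₀ hr₁ ht hn
  rw [neg_sub, neg_mul]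
  refine ⟨pos, le.trans ?_, fun hA ↦ ?_⟩
  · exact mul_le_mul_of_nonneg_right (one_sub_four_div_pi_sq_mul_add_half_le (by positivity))
      stretchedExp_pos.le
  · exact mul_lt_mul_of_pos_right (pi_div_two_sub_two_div_pi_mul_lt hA) (exp_pos _)

end Remainder

theorem statement13 (α r : ℝ) (p : ℝ≥0∞)
    (hα : 0 < α) (hr0 : 0 < r) (hr1 : r < 1) (hp : 1 ≤ p) :
    ∀ t ∈ Set.Icc (-π) π, ∀ n : ℕ, n₂ α r p ≤ n →
      0 < Rn α r n t ∧
      Rn α r n t ≤ (π / 2 - 2 / π) * (α * r * (n : ℝ) ^ (-(1 - r)) + 1) *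
        Real.exp (-2 * α * (n : ℝ) ^ r) ∧
      (π / 2 - 2 / π) * (α * r * (n : ℝ) ^ (-(1 - r)) + 1) * Real.exp (-2 * α * (n : ℝ) ^ r) <
        π / 3 * Real.exp (-2 * α * (n : ℝ) ^ r) := by
  intro t ht n hn
  obtain ⟨pos, le, lt⟩ := statement13_general hα hr0 hr1.le (abs_le.2 ht)
    ((n₂_spec α hr0 hr1 p).1.trans_le hn)
  exact ⟨pos, le, lt (mul_rpow_le_of_n₂_le hα hr0 hr1 hp hn)⟩
end
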